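/- arXiv:2407.09558 — 6 statements merged into one kernel-verified Lean document; each statement's English description precedes it below -/
import Mathlib

section
/- The set of nonzero integers k for which the Mordell equation y² = x³ + k has exactly |k| integral solutions (x, y) ∈ ℤ² is finite. -/
/-!
Points with `8 * x < |k|` number at most about `|k| / 2`, since also `x ≥ -|k| / 8` and each `x`
carries at most two values of `y`. So it is enough that the remaining points are `o(|k|)` in number.

Let `s ^ 2 = k`. Mordell attaches to `(x, y)` the cubic form
`X ^ 3 - 3 * x * X * Y ^ 2 - 2 * y * Y ^ 3`, which is `(U ^ 3 - V ^ 3) / (2 * s)` for linear forms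
`U`, `V` built from cube roots of `y + s` and `y - s`. Reducing the positive definite form
`|U| ^ 2 + |V| ^ 2` by `SL(2, ℤ)` replaces it by one of `O(|k| ^ (5 / 6))` equivalent cubic forms
`f`, and `x` becomes the value of the Hessian of `f` at a solution of `f (p, q) = 1`.

For a fixed `f`, a large solution makes `U / V` very close to a cube root of unity. Two solutions
close to the same root satisfy a gap principle `x₁ ^ 2 ≤ 100 * x₂`. In the other direction, the Padé
approximants to the cube root (Thue and Siegel) show `x₂ < x₁ ^ 7` as soon as `x₁` exceeds a fixed
power of `|k|`. Hence each `f` accounts for a bounded number of points.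
-/

namespace MordellEquation

open Finset Polynomial

/-! ### Integrality of the Padé coefficients -/

section DividedDifferences

variable {K ι : Type*} [Field K] [DecidableEq ι] {s : Finset ι}

lemma sum_nodalWeight_mul_eval_eq_zero {v : ι → K} (hv : Set.InjOn v s) {g : K[X]}
    (hg : g.natDegree + 1 < #s) :
    ∑ i ∈ s, Lagrange.nodalWeight s v i * g.eval (v i) = 0 := by
  have hdeg : g.degree < #s :=
    degree_le_natDegree.trans_lt (by exact_mod_cast (by omega : g.natDegree < #s))
  have hcoeff := Lagrange.coeff_eq_sum hv hdeg
  rw [coeff_eq_zero_of_natDegree_lt (by omega)] at hcoeff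
  rw [hcoeff]
  refine sum_congr rfl fun i _ => ?_
  rw [Lagrange.nodalWeight, prod_inv_distrib, div_eq_inv_mul]

-- The Taylor coefficients at `1` are divided differences of the binomial polynomials.
lemma X_sub_one_pow_dvd_sum_monomial_nodalWeight [CharZero K] {e : ι → ℕ}
    (he : Set.InjOn e s) :
    (X - C 1) ^ (#s - 1) ∣
      ∑ i ∈ s, monomial (e i) (Lagrange.nodalWeight s (fun j => (e j : K)) i) := by
  rw [X_sub_C_pow_dvd_iff, X_pow_dvd_iff]
  intro r hr
  let binomial : K[X] := C ((r.factorial : K)⁻¹) * descPochhammer K r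
  have eval_binomial (n : ℕ) : binomial.eval (n : K) = n.choose r := by
    have hr0 : (r.factorial : K) ≠ 0 := by exact_mod_cast r.factorial_ne_zero
    rw [eval_mul, eval_C, descPochhammer_eval_eq_descFactorial,
      Nat.descFactorial_eq_factorial_mul_choose, Nat.cast_mul, inv_mul_cancel_left₀ hr0]
  have hdeg : binomial.natDegree + 1 < #s := by
    have : binomial.natDegree ≤ r :=
      (natDegree_C_mul_le _ _).trans_eq (descPochhammer_natDegree K r)
    omega
  have hinj : Set.InjOn (fun i => (e i : K)) s := Nat.cast_injective.comp_injOn he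
  rw [← taylor_apply, taylor_coeff, map_sum, eval_finsetSum,
    ← sum_nodalWeight_mul_eval_eq_zero hinj hdeg]
  refine sum_congr rfl fun i _ => ?_
  simp [hasseDeriv_monomial, eval_binomial, mul_comm]

end DividedDifferences

section Coefficients

lemma dvd_prod_add_mul_of_coprime {w q : ℕ} (hwq : w.Coprime q) {m : ℕ} (hw : w ∣ m.factorial)
    (c : ℤ) : (w : ℤ) ∣ ∏ r ∈ range m, (c + q * r) := by
  obtain ⟨h, g, hgh⟩ : IsCoprime (w : ℤ) q := Nat.isCoprime_iff_coprime.2 hwq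
  have hwg : IsCoprime (w : ℤ) (g ^ m) := IsCoprime.pow_right ⟨h, q, by linarith⟩
  refine hwg.dvd_of_dvd_mul_left ?_
  -- Modulo `w` the factor `g` inverts `q`, so the progression becomes consecutive integers.
  have hmod : ∏ r ∈ range m, g * (c + q * r) ≡ ∏ r ∈ range m, (g * c + r) [ZMOD w] :=
    Int.ModEq.prod fun r _ => Int.modEq_iff_dvd.2 ⟨h * r, by linear_combination -(r : ℤ) * hgh⟩
  have hdvd : (w : ℤ) ∣ ∏ r ∈ range m, (g * c + r) :=
    (Int.natCast_dvd_natCast.2 hw).trans (Nat.factorial_coe_dvd_prod m (g * c))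
  simpa only [prod_mul_distrib, prod_const, card_range] using (Int.ModEq.dvd_iff hmod).2 hdvd

lemma factorial_dvd_pow_mul_prod_add_mul {q : ℕ} (hq : q.Prime) (c : ℤ) (m : ℕ) :
    (m.factorial : ℤ) ∣ q ^ m * ∏ r ∈ range m, (c + q * r) := by
  have : Fact q.Prime := ⟨hq⟩
  obtain ⟨e, w, hw, hm⟩ :=
    Nat.exists_eq_pow_mul_and_not_dvd m.factorial_ne_zero q hq.ne_one
  have he : e ≤ m :=
    ((padicValNat_dvd_iff_le m.factorial_ne_zero).1 (Dvd.intro _ hm.symm)).trans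
      (padicValNat_factorial_le q m)
  have hwq : w.Coprime q := ((Nat.Prime.coprime_iff_not_dvd hq).2 hw).symm
  rw [hm]
  push_cast
  exact mul_dvd_mul (pow_dvd_pow _ he)
    (dvd_prod_add_mul_of_coprime hwq (Dvd.intro_left _ hm.symm) c)

/-- The product `c (c + 3) ⋯ (c + 3 (m - 1))` of `m` terms of an arithmetic progression. -/
def stepProd (c m : ℕ) : ℕ := ∏ r ∈ range m, (c + 3 * r)

lemma stepProd_pos {c : ℕ} (hc : 0 < c) (m : ℕ) : 0 < stepProd c m :=
  prod_pos fun _ _ => by omega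

lemma stepProd_add (c i m : ℕ) :
    stepProd c (i + m) = stepProd c i * stepProd (3 * i + c) m := by
  rw [stepProd, prod_range_add]
  congr 1
  exact prod_congr rfl fun r _ => by ring

lemma stepProd_le {c a : ℕ} (hc : c ≤ 3 * (a + 1)) (m : ℕ) :
    stepProd c m ≤ 3 ^ m * (m.factorial * 2 ^ (a + m)) := by
  calc stepProd c m ≤ ∏ r ∈ range m, 3 * (a + 1 + r) := prod_le_prod' fun _ _ => by omega
    _ = 3 ^ m * (a + 1).ascFactorial m := by
        rw [Nat.ascFactorial_eq_prod_range, prod_mul_distrib, prod_const, card_range]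
    _ = 3 ^ m * (m.factorial * (a + m).choose m) := by
        rw [Nat.ascFactorial_eq_factorial_mul_choose]
    _ ≤ 3 ^ m * (m.factorial * 2 ^ (a + m)) := by
        gcongr
        exact Nat.choose_le_two_pow _ _

/-- The integer `9 ^ m * (c / 3) (c / 3 + 1) ⋯ (c / 3 + m - 1) / m!`, a multiset coefficient with
upper argument `c / 3` cleared of its denominator; the division by `m!` is exact. -/
def scaledMultichoose (c m : ℕ) : ℕ := 3 ^ m * stepProd c m / m.factorial

lemma scaledMultichoose_zero (c : ℕ) : scaledMultichoose c 0 = 1 := by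
  simp [scaledMultichoose, stepProd]

lemma scaledMultichoose_mul_factorial (c m : ℕ) :
    scaledMultichoose c m * m.factorial = 3 ^ m * stepProd c m := by
  refine Nat.div_mul_cancel ?_
  have h := factorial_dvd_pow_mul_prod_add_mul Nat.prime_three c m
  rw [stepProd]
  exact_mod_cast h

lemma scaledMultichoose_le {c a : ℕ} (hc : c ≤ 3 * (a + 1)) (m : ℕ) :
    scaledMultichoose c m ≤ 9 ^ m * 2 ^ (a + m) := by
  refine Nat.div_le_of_le_mul ?_
  calc 3 ^ m * stepProd c m ≤ 3 ^ m * (3 ^ m * (m.factorial * 2 ^ (a + m))) := by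
        gcongr
        exact stepProd_le hc m
    _ = m.factorial * (9 ^ m * 2 ^ (a + m)) := by
        rw [show 9 = 3 * 3 from rfl, mul_pow]
        ring

/-- The integer coefficients of the Padé approximants to the cube root, indexed by the two
exponents of a monomial. -/
def padeCoeff (i m : ℕ) : ℕ :=
  scaledMultichoose (3 * i + 2) m * scaledMultichoose (3 * m + 4) i

lemma padeCoeff_le (i m : ℕ) : padeCoeff i m ≤ 2 * 36 ^ (i + m) := by
  calc padeCoeff i m ≤ 9 ^ m * 2 ^ (i + m) * (9 ^ i * 2 ^ (m + 1 + i)) :=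
        Nat.mul_le_mul (scaledMultichoose_le (by omega) m) (scaledMultichoose_le (by omega) i)
    _ = 2 * (9 ^ (i + m) * 2 ^ (i + m) * 2 ^ (i + m)) := by ring
    _ = 2 * 36 ^ (i + m) := by
        rw [← mul_pow, ← mul_pow]
        norm_num

lemma padeCoeff_mul_factorials (i m : ℕ) :
    padeCoeff i m * (i.factorial * m.factorial * (stepProd 2 i * stepProd 4 m)) =
      3 ^ (i + m) * (stepProd 2 (i + m) * stepProd 4 (i + m)) := by
  have h4 : stepProd 4 (i + m) = stepProd 4 m * stepProd (3 * m + 4) i := by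
    rw [add_comm, stepProd_add]
  calc _ = (scaledMultichoose (3 * i + 2) m * m.factorial) *
          (scaledMultichoose (3 * m + 4) i * i.factorial) * (stepProd 2 i * stepProd 4 m) := by
        rw [padeCoeff]
        ring
    _ = _ := by
        rw [scaledMultichoose_mul_factorial, scaledMultichoose_mul_factorial, stepProd_add 2, h4]
        ring

end Coefficients

section NodalWeights

variable {R : Type*} [CommRing R]

lemma prod_erase_three_mul_sub (c : R) (i m : ℕ) :
    ∏ l ∈ (range (i + 1 + m)).erase i, (3 * i - 3 * l + c : R) =
      (-1) ^ m * ((∏ t ∈ range i, (3 * t + 3 + c)) * ∏ t ∈ range m, (3 * t + 3 - c)) := by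
  have hsplit : (range (i + 1 + m)).erase i = (range i).disjUnion
      ((range m).map (addLeftEmbedding (i + 1))) (disjoint_left.2 fun a ha hb => by
        simp only [mem_range, mem_map, addLeftEmbedding_apply] at ha hb
        obtain ⟨b, -, rfl⟩ := hb
        omega) := by
    ext a
    simp only [mem_erase, mem_range, mem_disjUnion, mem_map, addLeftEmbedding_apply]
    constructor
    · intro ⟨hne, hlt⟩
      rcases hne.lt_or_gt with h | h
      · exact .inl h
      · exact .inr ⟨a - (i + 1), by omega, by omega⟩
    · rintro (h | ⟨b, hb, rfl⟩) <;> omega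
  have hbelow : ∏ l ∈ range i, (3 * i - 3 * l + c : R) = ∏ t ∈ range i, (3 * t + 3 + c) := by
    rw [← prod_range_reflect]
    refine prod_congr rfl fun l hl => ?_
    rw [Nat.sub_sub, Nat.cast_sub (by have := mem_range.1 hl; omega)]
    push_cast
    ring
  have habove : ∏ t ∈ range m, (3 * i - 3 * (i + 1 + t : ℕ) + c : R) =
      (-1) ^ m * ∏ t ∈ range m, (3 * t + 3 - c) := by
    rw [← card_range m, ← prod_const, card_range, ← prod_mul_distrib]
    refine prod_congr rfl fun t _ => ?_
    push_cast
    ring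
  rw [hsplit, prod_disjUnion, prod_map, hbelow]
  simp only [addLeftEmbedding_apply]
  rw [habove]
  ring

lemma prod_erase_three_mul_sub_zero (i m : ℕ) :
    ∏ l ∈ (range (i + 1 + m)).erase i, (3 * i - 3 * l : R) =
      (-1) ^ m * 3 ^ (i + m) * (i.factorial * m.factorial) := by
  have hfactorial (j : ℕ) : ∏ t ∈ range j, (3 * t + 3 + 0 : R) = 3 ^ j * j.factorial := by
    rw [← prod_range_add_one_eq_factorial, Nat.cast_prod, ← card_range j, ← prod_const,
      card_range, ← prod_mul_distrib]
    exact prod_congr rfl fun t _ => by push_cast; ring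
  have h := prod_erase_three_mul_sub (0 : R) i m
  simp only [add_zero, sub_zero] at h hfactorial
  rw [h, hfactorial, hfactorial]
  ring

lemma prod_range_three_mul_sub_sub_one (i m : ℕ) :
    ∏ l ∈ range (i + 1 + m), (3 * i - 3 * l - 1 : R) =
      -((-1) ^ m * (stepProd 2 i * stepProd 4 m)) := by
  rw [← mul_prod_erase _ _ (mem_range.2 (by omega : i < i + 1 + m))]
  simp only [sub_eq_add_neg _ (1 : R)]
  rw [prod_erase_three_mul_sub, sub_self, zero_add, neg_one_mul]
  congr 3
  all_goals
    rw [stepProd, Nat.cast_prod]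
    exact prod_congr rfl fun t _ => by push_cast; ring

lemma prod_range_three_mul_sub_add_one (i m : ℕ) :
    ∏ l ∈ range (i + 1 + m), (3 * i - 3 * l + 1 : R) =
      (-1) ^ m * (stepProd 4 i * stepProd 2 m) := by
  rw [← mul_prod_erase _ _ (mem_range.2 (by omega : i < i + 1 + m)), sub_self, zero_add, one_mul,
    prod_erase_three_mul_sub]
  congr 2
  all_goals
    rw [stepProd, Nat.cast_prod]
    exact prod_congr rfl fun t _ => by push_cast; ring

/-- Two copies of `{0, …, n}`, indexing the exponents `3 j` and `3 j + 1` of the monomials that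
occur in the Padé remainder of order `n`. -/
def padeNodes (n : ℕ) : Finset (ℕ ⊕ ℕ) := (range (n + 1)).disjSum (range (n + 1))

/-- The exponent attached to a node: `3 j` on the first copy and `3 j + 1` on the second. -/
def padeExponent : ℕ ⊕ ℕ → ℕ := Sum.elim (3 * ·) (3 * · + 1)

lemma padeExponent_injective : Function.Injective padeExponent := by
  rintro (a | a) (b | b) h <;> simp [padeExponent] at h ⊢ <;> omega

lemma card_padeNodes (n : ℕ) : #(padeNodes n) = 2 * n + 2 := by
  rw [padeNodes, card_disjSum, card_range]
  ring

/-- The common factor clearing the denominators of all nodal weights of order `n`. -/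
def padeScale (n : ℕ) : ℕ := 9 ^ n * (stepProd 2 n * stepProd 4 n)

lemma padeScale_pos (n : ℕ) : 0 < padeScale n :=
  mul_pos (by positivity) (mul_pos (stepProd_pos two_pos n) (stepProd_pos four_pos n))

lemma padeCoeff_mul_eq_padeScale (i m : ℕ) :
    padeCoeff i m * (3 ^ (i + m) * (i.factorial * m.factorial) * (stepProd 2 i * stepProd 4 m)) =
      padeScale (i + m) := by
  rw [padeScale, show 9 = 3 * 3 from rfl, mul_pow]
  linear_combination 3 ^ (i + m) * padeCoeff_mul_factorials i m

variable {K : Type*} [Field K]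

lemma inv_nodalWeight_padeNodes_inl (i m : ℕ) :
    (Lagrange.nodalWeight (padeNodes (i + m)) (fun j => (padeExponent j : K)) (.inl i))⁻¹ =
      -(3 ^ (i + m) * (i.factorial * m.factorial) * (stepProd 2 i * stepProd 4 m)) := by
  have herase : (padeNodes (i + m)).erase (.inl i) =
      ((range (i + 1 + m)).erase i).disjSum (range (i + 1 + m)) := by
    ext (a | a) <;> simp [padeNodes, add_right_comm]
  have hsign : ((-1 : K) ^ m) * (-1) ^ m = 1 := by rw [← mul_pow]; simp
  rw [Lagrange.nodalWeight, prod_inv_distrib, inv_inv, herase, prod_disjSum]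
  simp only [padeExponent, Sum.elim_inl, Sum.elim_inr, Nat.cast_add, Nat.cast_mul,
    Nat.cast_ofNat, Nat.cast_one, ← sub_sub]
  rw [prod_erase_three_mul_sub_zero, prod_range_three_mul_sub_sub_one]
  linear_combination (-(3 ^ (i + m) * (i.factorial * m.factorial) *
    (stepProd 2 i * stepProd 4 m)) : K) * hsign

lemma inv_nodalWeight_padeNodes_inr (i m : ℕ) :
    (Lagrange.nodalWeight (padeNodes (i + m)) (fun j => (padeExponent j : K)) (.inr i))⁻¹ =
      3 ^ (m + i) * (m.factorial * i.factorial) * (stepProd 2 m * stepProd 4 i) := by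
  have herase : (padeNodes (i + m)).erase (.inr i) =
      (range (i + 1 + m)).disjSum ((range (i + 1 + m)).erase i) := by
    ext (a | a) <;> simp [padeNodes, add_right_comm]
  have hsign : ((-1 : K) ^ m) * (-1) ^ m = 1 := by rw [← mul_pow]; simp
  rw [Lagrange.nodalWeight, prod_inv_distrib, inv_inv, herase, prod_disjSum]
  simp only [padeExponent, Sum.elim_inl, Sum.elim_inr, Nat.cast_add, Nat.cast_mul,
    Nat.cast_ofNat, Nat.cast_one, add_sub_add_right_eq_sub]
  simp only [add_sub_right_comm]
  rw [prod_erase_three_mul_sub_zero, prod_range_three_mul_sub_add_one]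
  linear_combination (3 ^ (i + m) * (i.factorial * m.factorial) *
    (stepProd 4 i * stepProd 2 m) : K) * hsign

variable [CharZero K]

lemma padeCoeff_eq_neg_padeScale_mul_nodalWeight (i m : ℕ) :
    (padeCoeff i m : K) = -(padeScale (i + m) *
      Lagrange.nodalWeight (padeNodes (i + m)) (fun j => (padeExponent j : K)) (.inl i)) := by
  have hscale : (padeScale (i + m) : K) ≠ 0 := by exact_mod_cast (padeScale_pos _).ne'
  have h := inv_nodalWeight_padeNodes_inl (K := K) i m
  rw [← inv_inj, inv_inv] at h
  rw [h, ← padeCoeff_mul_eq_padeScale] at *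
  push_cast at hscale ⊢
  rw [inv_neg, mul_neg, neg_neg, mul_inv_cancel_right₀ (right_ne_zero_of_mul hscale)]

lemma padeCoeff_eq_padeScale_mul_nodalWeight (i m : ℕ) :
    (padeCoeff m i : K) = padeScale (i + m) *
      Lagrange.nodalWeight (padeNodes (i + m)) (fun j => (padeExponent j : K)) (.inr i) := by
  have hscale : (padeScale (m + i) : K) ≠ 0 := by exact_mod_cast (padeScale_pos _).ne'
  have h := inv_nodalWeight_padeNodes_inr (K := K) i m
  rw [← inv_inj, inv_inv] at h
  rw [h, add_comm i m]
  rw [← padeCoeff_mul_eq_padeScale] at *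
  push_cast at hscale ⊢
  rw [mul_inv_cancel_right₀ (right_ne_zero_of_mul hscale)]

end NodalWeights

/-! ### The Padé approximants -/

section PadeForm

/-- The homogeneous form of degree `n` whose ratio `padeForm n 1 t / padeForm n t 1` is the
diagonal Padé approximant to `t ^ (1 / 3)` at `t = 1`. -/
def padeForm {R : Type*} [CommSemiring R] (n : ℕ) (x y : R) : R :=
  ∑ ij ∈ antidiagonal n, padeCoeff ij.1 ij.2 * (x ^ ij.2 * y ^ ij.1)

lemma map_padeForm {R S : Type*} [CommSemiring R] [CommSemiring S] (φ : R →+* S) (n : ℕ)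
    (x y : R) : φ (padeForm n x y) = padeForm n (φ x) (φ y) := by
  simp only [padeForm, map_sum, map_mul, map_pow, map_natCast]

lemma padeForm_mul_mul {R : Type*} [CommSemiring R] (n : ℕ) (t x y : R) :
    padeForm n (t * x) (t * y) = t ^ n * padeForm n x y := by
  rw [padeForm, padeForm, mul_sum]
  refine sum_congr rfl fun ij hij => ?_
  rw [← mem_antidiagonal.1 hij, mul_pow, mul_pow, pow_add]
  ring

lemma norm_padeForm_le (n : ℕ) {x y : ℂ} {M : ℝ} (hx : ‖x‖ ≤ M) (hy : ‖y‖ ≤ M) :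
    ‖padeForm n x y‖ ≤ 2 * (72 * M) ^ n := by
  have hM : 0 ≤ M := (norm_nonneg x).trans hx
  have hterm : ∀ ij ∈ antidiagonal n,
      ‖(padeCoeff ij.1 ij.2 : ℂ) * (x ^ ij.2 * y ^ ij.1)‖ ≤ 2 * 36 ^ n * M ^ n := by
    intro ij hij
    rw [← mem_antidiagonal.1 hij, norm_mul, norm_mul, norm_pow, norm_pow, Complex.norm_natCast,
      pow_add M, mul_comm (M ^ ij.1)]
    gcongr
    exact_mod_cast padeCoeff_le ij.1 ij.2
  calc ‖padeForm n x y‖ ≤ (n + 1 : ℕ) * (2 * 36 ^ n * M ^ n) := by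
        rw [padeForm]
        refine (norm_sum_le_of_le _ hterm).trans_eq ?_
        rw [sum_const, Nat.card_antidiagonal, nsmul_eq_mul]
    _ ≤ (2 ^ n : ℕ) * (2 * 36 ^ n * M ^ n) := by
        gcongr
        exact Nat.lt_two_pow_self
    _ = 2 * (72 * M) ^ n := by
        rw [show (72 : ℝ) * M = 2 * 36 * M by norm_num, mul_pow, mul_pow]
        push_cast
        ring

/-- The remainder of the Padé approximation after the substitution `t = X ^ 3`. -/
noncomputable def padeError (K : Type*) [Field K] (n : ℕ) : K[X] :=
  padeForm n 1 (X ^ 3) - X * padeForm n (X ^ 3) 1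

lemma eval_padeError {K : Type*} [Field K] (n : ℕ) (z : K) :
    (padeError K n).eval z = padeForm n 1 (z ^ 3) - z * padeForm n (z ^ 3) 1 := by
  have heval (x y : K[X]) : (padeForm n x y).eval z = padeForm n (x.eval z) (y.eval z) :=
    map_padeForm (evalRingHom z) n x y
  simp [padeError, heval]

variable {K : Type*} [Field K] [CharZero K]

lemma padeError_eq_sum_nodalWeight (n : ℕ) :
    padeError K n = C (-padeScale n : K) * ∑ j ∈ padeNodes n, monomial (padeExponent j)
      (Lagrange.nodalWeight (padeNodes n) (fun j => (padeExponent j : K)) j) := by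
  rw [padeError, padeNodes, sum_disjSum, mul_add, sub_eq_add_neg, mul_sum, mul_sum]
  congr 1
  · rw [padeForm, Nat.sum_antidiagonal_eq_sum_range_succ_mk]
    refine sum_congr rfl fun i hi => ?_
    obtain ⟨m, rfl⟩ := Nat.exists_eq_add_of_le (Nat.lt_succ_iff.1 (mem_range.1 hi))
    rw [C_mul_monomial, neg_mul, ← padeNodes, ← padeCoeff_eq_neg_padeScale_mul_nodalWeight,
      ← C_mul_X_pow_eq_monomial]
    simp [padeExponent, pow_mul]
  · rw [padeForm, ← Nat.sum_antidiagonal_swap, Nat.sum_antidiagonal_eq_sum_range_succ_mk,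
      mul_sum, ← sum_neg_distrib]
    refine sum_congr rfl fun i hi => ?_
    obtain ⟨m, rfl⟩ := Nat.exists_eq_add_of_le (Nat.lt_succ_iff.1 (mem_range.1 hi))
    rw [C_mul_monomial, neg_mul, ← padeNodes, ← padeCoeff_eq_padeScale_mul_nodalWeight,
      ← C_mul_X_pow_eq_monomial, map_neg, map_natCast]
    simp only [padeExponent, Sum.elim_inr, Prod.swap, Nat.add_sub_cancel_left]
    ring

lemma X_sub_one_pow_dvd_padeError (n : ℕ) : (X - C 1) ^ (2 * n + 1) ∣ padeError K n := by
  rw [padeError_eq_sum_nodalWeight]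
  have h := X_sub_one_pow_dvd_sum_monomial_nodalWeight (K := K) (s := padeNodes n)
    padeExponent_injective.injOn
  rw [card_padeNodes] at h
  exact h.mul_left _

end PadeForm

section PadeApproximation

lemma norm_eval_padeError_le_of_norm_sub_one_eq (n : ℕ) {z : ℂ} (hz : ‖z - 1‖ = 1) :
    ‖(padeError ℂ n).eval z‖ ≤ 6 * 576 ^ n := by
  have hz2 : ‖z‖ ≤ 2 := by
    calc ‖z‖ = ‖(z - 1) + 1‖ := by rw [sub_add_cancel]
      _ ≤ ‖z - 1‖ + ‖(1 : ℂ)‖ := norm_add_le _ _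
      _ = 2 := by rw [hz, norm_one]; norm_num
  have hz3 : ‖z ^ 3‖ ≤ 8 := by
    rw [norm_pow]
    exact (pow_le_pow_left₀ (norm_nonneg z) hz2 3).trans_eq (by norm_num)
  have h1 : ‖(1 : ℂ)‖ ≤ 8 := by norm_num
  have h576 : (72 * 8 : ℝ) = 576 := by norm_num
  rw [eval_padeError]
  calc _ ≤ ‖padeForm n 1 (z ^ 3)‖ + ‖z‖ * ‖padeForm n (z ^ 3) 1‖ :=
        (norm_sub_le _ _).trans_eq (by rw [norm_mul])
    _ ≤ 2 * (72 * 8) ^ n + 2 * (2 * (72 * 8) ^ n) := by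
        gcongr
        · exact norm_padeForm_le n h1 hz3
        · exact norm_padeForm_le n hz3 h1
    _ = 6 * 576 ^ n := by rw [h576]; ring

-- The maximum principle is applied to the quotient by `(z - 1) ^ (2 * n + 1)` on the unit disc
-- around `1`.
lemma norm_eval_padeError_le (n : ℕ) {z : ℂ} (hz : ‖z - 1‖ ≤ 1) :
    ‖(padeError ℂ n).eval z‖ ≤ 6 * 576 ^ n * ‖z - 1‖ ^ (2 * n + 1) := by
  obtain ⟨E, hE⟩ := X_sub_one_pow_dvd_padeError (K := ℂ) n
  have heval (w : ℂ) : ‖(padeError ℂ n).eval w‖ = ‖w - 1‖ ^ (2 * n + 1) * ‖E.eval w‖ := by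
    simp [hE]
  have hquot : ‖E.eval z‖ ≤ 6 * 576 ^ n := by
    refine Complex.norm_le_of_forall_mem_frontier_norm_le (f := fun w => E.eval w)
      (U := Metric.ball (1 : ℂ) 1) Metric.isBounded_ball E.differentiable.diffContOnCl ?_ ?_
    · intro w hw
      rw [frontier_ball _ one_ne_zero, mem_sphere_iff_norm] at hw
      simpa [heval, hw] using norm_eval_padeError_le_of_norm_sub_one_eq n hw
    · rwa [closure_ball _ one_ne_zero, mem_closedBall_iff_norm]
  rw [heval, mul_comm]
  gcongr

lemma norm_mul_padeForm_sub_mul_padeForm_le (n : ℕ) {u v : ℂ} (hv : v ≠ 0)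
    (huv : ‖u - v‖ ≤ ‖v‖) :
    ‖v * padeForm n (v ^ 3) (u ^ 3) - u * padeForm n (u ^ 3) (v ^ 3)‖ ≤
      6 * 576 ^ n * (‖v‖ ^ n * ‖u - v‖ ^ (2 * n + 1)) := by
  have hv0 : 0 < ‖v‖ := norm_pos_iff.2 hv
  have hz : ‖u / v - 1‖ = ‖u - v‖ / ‖v‖ := by rw [← norm_div, sub_div, div_self hv]
  have hu3 : u ^ 3 = v ^ 3 * (u / v) ^ 3 := by rw [div_pow]; field_simp
  have hform : v * padeForm n (v ^ 3) (u ^ 3) - u * padeForm n (u ^ 3) (v ^ 3) =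
      v ^ (3 * n + 1) * (padeError ℂ n).eval (u / v) := by
    have hleft := padeForm_mul_mul n (v ^ 3) 1 ((u / v) ^ 3)
    have hright := padeForm_mul_mul n (v ^ 3) ((u / v) ^ 3) 1
    rw [mul_one, ← hu3] at hleft hright
    rw [hleft, hright, eval_padeError, pow_succ v (3 * n), pow_mul]
    linear_combination ((v ^ 3) ^ n * padeForm n ((u / v) ^ 3) 1) * (mul_div_cancel₀ u hv)
  have herror := norm_eval_padeError_le n (z := u / v) (by rwa [hz, div_le_one hv0])
  rw [hform, norm_mul, norm_pow]
  calc _ ≤ ‖v‖ ^ (3 * n + 1) * (6 * 576 ^ n * ‖u / v - 1‖ ^ (2 * n + 1)) := by gcongr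
    _ = _ := by
      rw [hz, div_pow, show 3 * n + 1 = n + (2 * n + 1) by ring, pow_add]
      field_simp

end PadeApproximation

section PadeDeterminant

lemma X_sub_one_pow_dvd_of_dvd_comp {K : Type*} [Field K] [CharZero K] {r : ℕ} (hr : r ≠ 0)
    (m : ℕ) : ∀ D : K[X], (X - C 1) ^ m ∣ D.comp (X ^ r) → (X - C 1) ^ m ∣ D := by
  induction m with
  | zero => simp
  | succ m ih =>
    intro D hD
    have hroot : D.IsRoot 1 := by
      have h : ((D.comp (X ^ r)).IsRoot 1) :=
        dvd_iff_isRoot.1 ((dvd_pow_self _ m.succ_ne_zero).trans hD)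
      simpa [IsRoot] using h
    obtain ⟨E, rfl⟩ := dvd_iff_isRoot.2 hroot
    have hcomp : ((X - C 1) * E).comp (X ^ r) =
        (X - C 1) * (E.comp (X ^ r) * ∑ i ∈ range r, X ^ i) := by
      have := geom_sum_mul (X : K[X]) r
      simp only [mul_comp, sub_comp, X_comp, map_one, one_comp]
      linear_combination -E.comp (X ^ r) * this
    have hcoprime : IsCoprime ((X - C 1) ^ m) (∑ i ∈ range r, (X : K[X]) ^ i) := by
      refine IsCoprime.pow_left ((irreducible_X_sub_C 1).coprime_iff_not_dvd.2 ?_)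
      rw [dvd_iff_isRoot, IsRoot, eval_geom_sum]
      simpa using hr
    rw [hcomp, pow_succ', mul_dvd_mul_iff_left (X_sub_C_ne_zero 1)] at hD
    rw [pow_succ']
    exact mul_dvd_mul_left _ (ih E (hcoprime.dvd_of_dvd_mul_right hD))

lemma eval_ne_zero_of_X_sub_C_pow_dvd {K : Type*} [Field K] {D : K[X]} {a w : K} {N : ℕ}
    (hD : D ≠ 0) (hdeg : D.natDegree ≤ N) (hdvd : (X - C a) ^ N ∣ D) (hw : w ≠ a) :
    D.eval w ≠ 0 := by
  obtain ⟨E, rfl⟩ := hdvd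
  have hE : E ≠ 0 := right_ne_zero_of_mul hD
  rw [natDegree_mul (pow_ne_zero _ (X_sub_C_ne_zero a)) hE, natDegree_pow, natDegree_X_sub_C,
    mul_one] at hdeg
  obtain ⟨c, rfl⟩ := natDegree_eq_zero.1 (by omega : E.natDegree = 0)
  simpa [sub_eq_zero, hw] using hE

/-- The determinant of two consecutive pairs of Padé forms. -/
def padeDet {R : Type*} [CommRing R] (n : ℕ) (x y : R) : R :=
  padeForm n x y * padeForm (n + 1) y x - padeForm (n + 1) x y * padeForm n y x

lemma map_padeDet {R S : Type*} [CommRing R] [CommRing S] (φ : R →+* S) (n : ℕ) (x y : R) :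
    φ (padeDet n x y) = padeDet n (φ x) (φ y) := by
  simp only [padeDet, map_sub, map_mul, map_padeForm]

lemma padeForm_one_zero {R : Type*} [CommSemiring R] (n : ℕ) :
    padeForm n (1 : R) 0 = padeCoeff 0 n := by
  rw [padeForm, Nat.sum_antidiagonal_eq_sum_range_succ_mk, sum_range_succ']
  simp

lemma padeForm_zero_one {R : Type*} [CommSemiring R] (n : ℕ) :
    padeForm n (0 : R) 1 = padeCoeff n 0 := by
  rw [padeForm, ← Nat.sum_antidiagonal_swap, Nat.sum_antidiagonal_eq_sum_range_succ_mk,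
    sum_range_succ']
  simp

lemma padeCoeff_mul_padeCoeff_ne (n : ℕ) :
    padeCoeff 0 n * padeCoeff (n + 1) 0 ≠ padeCoeff 0 (n + 1) * padeCoeff n 0 := by
  have hsucc (c : ℕ) : scaledMultichoose c (n + 1) * (n + 1) =
      3 * (c + 3 * n) * scaledMultichoose c n := by
    refine Nat.eq_of_mul_eq_mul_right n.factorial_pos ?_
    rw [mul_assoc, ← Nat.factorial_succ, scaledMultichoose_mul_factorial, mul_assoc _ _ n.factorial,
      scaledMultichoose_mul_factorial, stepProd, prod_range_succ, ← stepProd]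
    ring
  have hpos {c : ℕ} (hc : 0 < c) : 0 < scaledMultichoose c n := by
    refine Nat.pos_of_mul_pos_right (b := n.factorial) ?_
    rw [scaledMultichoose_mul_factorial]
    exact mul_pos (by positivity) (stepProd_pos hc n)
  intro heq
  simp only [padeCoeff, scaledMultichoose_zero, mul_zero, zero_add, mul_one, one_mul] at heq
  have hne : 0 < 3 * (scaledMultichoose 2 n * scaledMultichoose 4 n) :=
    mul_pos three_pos (mul_pos (hpos two_pos) (hpos four_pos))
  have : 4 + 3 * n = 2 + 3 * n := by
    refine Nat.eq_of_mul_eq_mul_left hne ?_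
    linear_combination (n + 1) * heq + scaledMultichoose 4 n * hsucc 2 -
      scaledMultichoose 2 n * hsucc 4
  omega

variable {K : Type*} [Field K] [CharZero K]

lemma padeDet_one_X_ne_zero (n : ℕ) : padeDet n 1 (X : K[X]) ≠ 0 := by
  intro h
  have h0 : padeDet n 1 (0 : K) = 0 := by
    simpa [h] using (map_padeDet (evalRingHom (0 : K)) n 1 X).symm
  rw [padeDet, padeForm_one_zero, padeForm_one_zero, padeForm_zero_one, padeForm_zero_one,
    sub_eq_zero] at h0
  exact padeCoeff_mul_padeCoeff_ne n (by exact_mod_cast h0)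

lemma natDegree_padeForm_le {R : Type*} [CommSemiring R] (n : ℕ) {x y : R[X]}
    (hx : x.natDegree ≤ 1) (hy : y.natDegree ≤ 1) : (padeForm n x y).natDegree ≤ n := by
  refine natDegree_sum_le_of_forall_le _ _ fun ij hij => ?_
  have hmonomial : (x ^ ij.2 * y ^ ij.1).natDegree ≤ ij.2 * 1 + ij.1 * 1 :=
    natDegree_mul_le_of_le (natDegree_pow_le_of_le _ hx) (natDegree_pow_le_of_le _ hy)
  have hsum := mem_antidiagonal.1 hij
  rw [← map_natCast C]
  exact (natDegree_C_mul_le _ _).trans (by omega)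

lemma natDegree_padeDet_le {R : Type*} [CommRing R] (n : ℕ) {x y : R[X]}
    (hx : x.natDegree ≤ 1) (hy : y.natDegree ≤ 1) : (padeDet n x y).natDegree ≤ 2 * n + 1 := by
  refine natDegree_sub_le_of_le (m := 2 * n + 1) ?_ ?_ |>.trans_eq (max_self _)
  · exact (natDegree_mul_le_of_le (natDegree_padeForm_le n hx hy)
      (natDegree_padeForm_le (n + 1) hy hx)).trans_eq (by ring)
  · exact (natDegree_mul_le_of_le (natDegree_padeForm_le (n + 1) hx hy)
      (natDegree_padeForm_le n hy hx)).trans_eq (by ring)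

lemma X_sub_one_pow_dvd_padeDet (n : ℕ) : (X - C 1) ^ (2 * n + 1) ∣ padeDet n 1 (X : K[X]) := by
  refine X_sub_one_pow_dvd_of_dvd_comp three_ne_zero _ _ ?_
  have hcomp : (padeDet n 1 (X : K[X])).comp (X ^ 3) =
      padeError K n * padeForm (n + 1) (X ^ 3) 1 - padeError K (n + 1) * padeForm n (X ^ 3) 1 := by
    rw [← coe_compRingHom_apply, map_padeDet, map_one, coe_compRingHom_apply, X_comp, padeDet,
      padeError, padeError]
    ring
  rw [hcomp]
  exact dvd_sub ((X_sub_one_pow_dvd_padeError n).mul_right _)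
    (((pow_dvd_pow _ (by omega)).trans (X_sub_one_pow_dvd_padeError (n + 1))).mul_right _)

lemma padeDet_ne_zero (n : ℕ) {x y : K} (hx : x ≠ 0) (hxy : x ≠ y) : padeDet n x y ≠ 0 := by
  have hy : y = x * (y / x) := (mul_div_cancel₀ y hx).symm
  have heval : padeDet n 1 (y / x) ≠ 0 := by
    have h := eval_ne_zero_of_X_sub_C_pow_dvd (padeDet_one_X_ne_zero (K := K) n)
      (natDegree_padeDet_le n (by simp) natDegree_X_le) (X_sub_one_pow_dvd_padeDet n)
      (w := y / x) (by rwa [Ne, div_eq_one_iff_eq hx, eq_comm])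
    rwa [← coe_evalRingHom, map_padeDet, map_one, coe_evalRingHom, eval_X] at h
  have hhom : padeDet n x y = x ^ n * x ^ (n + 1) * padeDet n 1 (y / x) := by
    have h (m : ℕ) := padeForm_mul_mul m x 1 (y / x)
    have h' (m : ℕ) := padeForm_mul_mul m x (y / x) 1
    simp only [mul_one, ← hy] at h h'
    rw [padeDet, padeDet, h, h, h', h']
    ring
  rw [hhom]
  exact mul_ne_zero (mul_ne_zero (pow_ne_zero _ hx) (pow_ne_zero _ hx)) heval

end PadeDeterminant

section Conjugation

lemma padeForm_conj_mem_quadratic (n : ℕ) {k : ℤ} {s : ℂ} (hs : s ^ 2 = k) (y : ℤ) :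
    ∃ a b : ℤ, padeForm n (y + s) (y - s) = a + b * s ∧ padeForm n (y - s) (y + s) = a - b * s := by
  let φ : ℤ√k →+* ℂ := Zsqrtd.lift ⟨s, by rw [← hs, sq]⟩
  have hφ (z : ℤ√k) : φ z = z.re + z.im * s := rfl
  have hadd : φ ⟨y, 1⟩ = y + s := by simp [hφ]
  have hsub : φ ⟨y, -1⟩ = y - s := by simp [hφ, sub_eq_add_neg]
  have hstar : star (padeForm n (⟨y, 1⟩ : ℤ√k) ⟨y, -1⟩) = padeForm n ⟨y, -1⟩ ⟨y, 1⟩ := by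
    rw [← starRingEnd_apply, map_padeForm]
    simp [starRingEnd_apply, Zsqrtd.star_mk]
  refine ⟨(padeForm n (⟨y, 1⟩ : ℤ√k) ⟨y, -1⟩).re, (padeForm n (⟨y, 1⟩ : ℤ√k) ⟨y, -1⟩).im, ?_, ?_⟩
  · rw [← hadd, ← hsub, ← map_padeForm, hφ]
  · rw [← hadd, ← hsub, ← map_padeForm, ← hstar, hφ, Zsqrtd.re_star, Zsqrtd.im_star]
    push_cast
    ring

end Conjugation

/-! ### Large points and the gap principle -/

section LargePoints

lemma norm_sub_mul_norm_sq_le {u v : ℂ} (hmin : ∀ w : ℂ, w ^ 3 = 1 → ‖u - v‖ ≤ ‖u - w * v‖) :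
    3 * (‖u - v‖ * ‖v‖ ^ 2) ≤ 4 * ‖u ^ 3 - v ^ 3‖ := by
  obtain ⟨w, hw⟩ : ∃ w : ℂ, w ^ 2 + w + 1 = 0 := by
    have h := (Complex.isPrimitiveRoot_exp 3 three_ne_zero).geom_sum_eq_zero (by norm_num)
    simp only [sum_range_succ, sum_range_zero] at h
    exact ⟨_, by linear_combination h⟩
  have hw3 : w ^ 3 = 1 := by linear_combination (w - 1) * hw
  have hnear (z : ℂ) (hz : z ^ 3 = 1) : ‖1 - z‖ * ‖v‖ ≤ 2 * ‖u - z * v‖ := by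
    rw [← norm_mul, show (1 - z) * v = (u - z * v) - (u - v) by ring]
    linarith [norm_sub_le (u - z * v) (u - v), hmin z hz]
  have hprod : ‖1 - w‖ * ‖1 - w ^ 2‖ = 3 := by
    rw [← norm_mul, show (1 - w) * (1 - w ^ 2) = 3 by linear_combination (w - 2) * hw]
    norm_num
  have hfactor : (u - v) * ((u - w * v) * (u - w ^ 2 * v)) = u ^ 3 - v ^ 3 := by
    linear_combination (w * u * v ^ 2 - u ^ 2 * v) * hw - v ^ 3 * hw3
  calc 3 * (‖u - v‖ * ‖v‖ ^ 2) = ‖u - v‖ * ((‖1 - w‖ * ‖v‖) * (‖1 - w ^ 2‖ * ‖v‖)) := by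
        rw [← hprod]
        ring
    _ ≤ ‖u - v‖ * ((2 * ‖u - w * v‖) * (2 * ‖u - w ^ 2 * v‖)) := by
        refine mul_le_mul_of_nonneg_left (mul_le_mul (hnear w hw3) (hnear (w ^ 2) ?_)
          (by positivity) (by positivity)) (norm_nonneg _)
        rw [pow_right_comm, hw3, one_pow]
    _ = 4 * ‖u ^ 3 - v ^ 3‖ := by
        rw [← hfactor, norm_mul, norm_mul]
        ring

/-- An integral point `(x, y)` of `y ^ 2 = x ^ 3 + k` with `10 ^ 12 ≤ |k| ≤ 8 * x`, together with
cube roots `u`, `v` of `y + s` and `y - s`, where `s ^ 2 = k`, chosen so that `u` is at least as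
close to `v` as to the other cube roots of `y - s`. -/
structure IsLargePoint (k : ℤ) (s : ℂ) (x y : ℤ) (u v : ℂ) : Prop where
  sq_eq : s ^ 2 = k
  le_abs : 10 ^ 12 ≤ |k|
  abs_le : |k| ≤ 8 * x
  left_cube : u ^ 3 = y + s
  right_cube : v ^ 3 = y - s
  mul_eq : u * v = x
  norm_sub_le : ∀ w : ℂ, w ^ 3 = 1 → ‖u - v‖ ≤ ‖u - w * v‖

namespace IsLargePoint

variable {k x y : ℤ} {s u v : ℂ} (h : IsLargePoint k s x y u v)

include h

lemma ten_pow_le : (10 : ℝ) ^ 11 ≤ x := by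
  have h1 := h.le_abs
  have h2 := h.abs_le
  have : (10 : ℤ) ^ 11 ≤ x := by norm_num at h1 ⊢; omega
  exact_mod_cast this

lemma norm_sq_eq : ‖s‖ ^ 2 = |(k : ℝ)| := by
  rw [← norm_pow, h.sq_eq, Complex.norm_intCast]

lemma norm_pos : 0 < ‖s‖ := by
  have hk : (0 : ℝ) < |(k : ℝ)| := by
    exact_mod_cast (by norm_num : (0 : ℤ) < 10 ^ 12).trans_le h.le_abs
  rw [← h.norm_sq_eq] at hk
  exact lt_of_pow_lt_pow_left₀ 2 (norm_nonneg s) (by simpa using hk)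

lemma mordell : (y : ℝ) ^ 2 = x ^ 3 + k := by
  have hcubes : (y : ℂ) ^ 2 = x ^ 3 + k := by
    rw [← h.mul_eq, ← h.sq_eq, mul_pow, h.left_cube, h.right_cube]
    ring
  exact_mod_cast hcubes

lemma norm_sq_le_of_pow_three_le {z : ℂ} (hz : ‖z‖ ^ 3 ≤ |(y : ℝ)| + ‖s‖) :
    ‖z‖ ^ 2 ≤ 2 * x := by
  have hx := h.ten_pow_le
  have hk : |(k : ℝ)| ≤ 8 * x := by exact_mod_cast h.abs_le
  have hcube : (x : ℝ) * 100 ≤ x ^ 3 := by nlinarith [sq_nonneg (x : ℝ)]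
  have hsix : (‖z‖ ^ 2) ^ 3 ≤ (2 * (x : ℝ)) ^ 3 := by
    calc (‖z‖ ^ 2) ^ 3 = (‖z‖ ^ 3) ^ 2 := by ring
      _ ≤ (|(y : ℝ)| + ‖s‖) ^ 2 := by gcongr
      _ ≤ 2 * (|(y : ℝ)| ^ 2 + ‖s‖ ^ 2) := add_sq_le
      _ = 2 * ((x ^ 3 + k) + |(k : ℝ)|) := by rw [h.norm_sq_eq, sq_abs, h.mordell]
      _ ≤ 2 * ((x ^ 3 + 8 * x) + 8 * x) := by linarith [le_abs_self (k : ℝ)]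
      _ ≤ (2 * (x : ℝ)) ^ 3 := by nlinarith
  exact le_of_pow_le_pow_left₀ three_ne_zero (by positivity) hsix

lemma norm_left_sq_le : ‖u‖ ^ 2 ≤ 2 * x := by
  refine h.norm_sq_le_of_pow_three_le ?_
  rw [← norm_pow, h.left_cube, ← Complex.norm_intCast]
  exact norm_add_le _ _

lemma norm_right_sq_le : ‖v‖ ^ 2 ≤ 2 * x := by
  refine h.norm_sq_le_of_pow_three_le ?_
  rw [← norm_pow, h.right_cube, ← Complex.norm_intCast]
  exact _root_.norm_sub_le _ _

lemma le_norm_right_sq : (x : ℝ) / 2 ≤ ‖v‖ ^ 2 := by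
  have hx := h.ten_pow_le
  have hmul : ‖u‖ * ‖v‖ = x := by
    rw [← norm_mul, h.mul_eq, Complex.norm_intCast, abs_of_pos (by linarith)]
  have hsq : (x : ℝ) * x ≤ x * (2 * ‖v‖ ^ 2) := by
    calc (x : ℝ) * x = ‖u‖ ^ 2 * ‖v‖ ^ 2 := by rw [← hmul]; ring
      _ ≤ 2 * x * ‖v‖ ^ 2 := by
          gcongr
          exact h.norm_left_sq_le
      _ = x * (2 * ‖v‖ ^ 2) := by ring
  linarith [le_of_mul_le_mul_left hsq (by linarith)]

lemma norm_sub_mul_le : ‖u - v‖ * x ≤ 6 * ‖s‖ := by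
  have hcubes : ‖u ^ 3 - v ^ 3‖ = 2 * ‖s‖ := by
    rw [h.left_cube, h.right_cube, show (y + s - (y - s) : ℂ) = 2 * s by ring, norm_mul,
      Complex.norm_ofNat]
  have hclose := norm_sub_mul_norm_sq_le h.norm_sub_le
  rw [hcubes] at hclose
  have hv := mul_le_mul_of_nonneg_left h.le_norm_right_sq (norm_nonneg (u - v))
  linarith [norm_nonneg s]

lemma sqrt_sq : √(x : ℝ) ^ 2 = x :=
  Real.sq_sqrt (by linarith [h.ten_pow_le])

lemma le_sqrt : 100 ≤ √(x : ℝ) :=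
  Real.le_sqrt_of_sq_le (by linarith [h.ten_pow_le])

lemma norm_left_le : ‖u‖ ≤ 3 / 2 * √(x : ℝ) := by
  refine le_of_pow_le_pow_left₀ two_ne_zero (by positivity) ?_
  rw [mul_pow, h.sqrt_sq]
  linarith [h.norm_left_sq_le, h.ten_pow_le]

lemma norm_right_le : ‖v‖ ≤ 3 / 2 * √(x : ℝ) := by
  refine le_of_pow_le_pow_left₀ two_ne_zero (by positivity) ?_
  rw [mul_pow, h.sqrt_sq]
  linarith [h.norm_right_sq_le, h.ten_pow_le]

lemma norm_sub_le_div : ‖u - v‖ ≤ 6 * ‖s‖ / √(x : ℝ) ^ 2 := by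
  rw [h.sqrt_sq, le_div_iff₀ (by linarith [h.ten_pow_le])]
  exact h.norm_sub_mul_le

end IsLargePoint

end LargePoints

section GapPrinciple

lemma le_of_one_le_add_div {r₁ r₂ : ℝ} (hr₁ : 100 ≤ r₁) (hr : r₁ ≤ r₂)
    (h : 1 ≤ 9 / 2 * (r₂ / r₁ ^ 2 + r₁ / r₂ ^ 2)) : r₁ ^ 2 ≤ 10 * r₂ := by
  have hsmall : r₁ / r₂ ^ 2 ≤ 1 / 100 := by
    rw [div_le_div_iff₀ (by nlinarith) (by norm_num)]
    nlinarith
  have hlarge : 1 / 10 ≤ r₂ / r₁ ^ 2 := by linarith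
  rw [le_div_iff₀ (by nlinarith)] at hlarge
  linarith

variable {k x₁ y₁ x₂ y₂ : ℤ} {s u₁ v₁ u₂ v₂ : ℂ}

lemma sq_le_of_isLargePoint (h₁ : IsLargePoint k s x₁ y₁ u₁ v₁)
    (h₂ : IsLargePoint k s x₂ y₂ u₂ v₂) (hle : x₁ ≤ x₂) {m : ℤ} (hm : m ≠ 0)
    (hdiff : u₁ * v₂ - u₂ * v₁ = 2 * s * m) : x₁ ^ 2 ≤ 100 * x₂ := by
  set r₁ := √(x₁ : ℝ) with hr₁
  set r₂ := √(x₂ : ℝ) with hr₂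
  have hr : r₁ ≤ r₂ := Real.sqrt_le_sqrt (by exact_mod_cast hle)
  have hpos : 0 < 2 * ‖s‖ := by linarith [h₁.norm_pos]
  have hm1 : (1 : ℝ) ≤ |(m : ℝ)| := by exact_mod_cast Int.one_le_abs hm
  have hbound : 2 * ‖s‖ * 1 ≤ 2 * ‖s‖ * (9 / 2 * (r₂ / r₁ ^ 2 + r₁ / r₂ ^ 2)) := by
    calc 2 * ‖s‖ * 1 ≤ 2 * ‖s‖ * |(m : ℝ)| := by gcongr
      _ = ‖(u₁ - v₁) * v₂ - (u₂ - v₂) * v₁‖ := by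
          rw [show (u₁ - v₁) * v₂ - (u₂ - v₂) * v₁ = u₁ * v₂ - u₂ * v₁ by ring, hdiff, norm_mul,
            norm_mul, Complex.norm_intCast, Complex.norm_ofNat]
      _ ≤ ‖u₁ - v₁‖ * ‖v₂‖ + ‖u₂ - v₂‖ * ‖v₁‖ := by
          rw [← norm_mul, ← norm_mul]
          exact norm_sub_le _ _
      _ ≤ 6 * ‖s‖ / r₁ ^ 2 * (3 / 2 * r₂) + 6 * ‖s‖ / r₂ ^ 2 * (3 / 2 * r₁) := by
          gcongr
          exacts [h₁.norm_sub_le_div, h₂.norm_right_le, h₂.norm_sub_le_div, h₁.norm_right_le]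
      _ = _ := by ring
  have hgap : r₁ ^ 2 ≤ 10 * r₂ :=
    le_of_one_le_add_div h₁.le_sqrt hr (le_of_mul_le_mul_left hbound hpos)
  have hsq : (x₁ : ℝ) ^ 2 ≤ 100 * x₂ := by
    rw [← h₁.sqrt_sq, ← h₂.sqrt_sq, ← hr₁, ← hr₂]
    calc (r₁ ^ 2) ^ 2 ≤ (10 * r₂) ^ 2 := by gcongr
      _ = 100 * r₂ ^ 2 := by ring
  exact_mod_cast hsq

end GapPrinciple

/-! ### The hypergeometric method -/

section ThuePrinciple

/-- The small quantity of the hypergeometric method: the `n`-th Padé approximation to the ratio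
`u₁ / v₁` is tested against the approximation `u₂ / v₂`. -/
noncomputable def padeLinearForm (n : ℕ) (u₁ v₁ u₂ v₂ : ℂ) : ℂ :=
  padeForm n (v₁ ^ 3) (u₁ ^ 3) * (v₁ * u₂) - padeForm n (u₁ ^ 3) (v₁ ^ 3) * (u₁ * v₂)

lemma padeLinearForm_eq (n : ℕ) (u₁ v₁ u₂ v₂ : ℂ) :
    padeLinearForm n u₁ v₁ u₂ v₂ =
      u₂ * (v₁ * padeForm n (v₁ ^ 3) (u₁ ^ 3) - u₁ * padeForm n (u₁ ^ 3) (v₁ ^ 3)) +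
        u₁ * padeForm n (u₁ ^ 3) (v₁ ^ 3) * (u₂ - v₂) := by
  unfold padeLinearForm
  ring

lemma padeLinearForm_ne_zero_or_succ_ne_zero (n : ℕ) {u₁ v₁ u₂ v₂ : ℂ} (hu₁ : u₁ ≠ 0)
    (hv₁ : v₁ ≠ 0) (hv₂ : v₂ ≠ 0) (hcubes : v₁ ^ 3 ≠ u₁ ^ 3) :
    padeLinearForm n u₁ v₁ u₂ v₂ ≠ 0 ∨ padeLinearForm (n + 1) u₁ v₁ u₂ v₂ ≠ 0 := by
  by_contra! ⟨hn, hsucc⟩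
  refine padeDet_ne_zero n (pow_ne_zero 3 hv₁) hcubes ?_
  refine (mul_eq_zero.1 ?_).resolve_right (mul_ne_zero hu₁ hv₂)
  unfold padeLinearForm at hn hsucc
  unfold padeDet
  linear_combination padeForm (n + 1) (v₁ ^ 3) (u₁ ^ 3) * hn -
    padeForm n (v₁ ^ 3) (u₁ ^ 3) * hsucc

lemma exists_mul_pow_lt_and_lt_sq {T r R : ℝ} (hT : 1 < T) (hr : T ^ 8 ≤ r) (hR : r ^ 7 ≤ R) :
    ∃ n : ℕ, R * T ^ (n + 1) < r ^ (3 * n + 2) ∧ r ^ (3 * n + 4) * T ^ (n + 2) < R ^ 2 := by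
  have hr1 : 1 < r := (one_lt_pow₀ hT (by norm_num)).trans_le hr
  obtain ⟨N, hN, hN'⟩ := exists_nat_pow_near ((one_le_pow₀ hr1.le).trans hR) hr1
  have hN7 : 7 < N + 1 := (pow_lt_pow_iff_right₀ hr1).1 (hR.trans_lt hN')
  obtain ⟨n, hn3, hn, hn'⟩ : ∃ n, 3 ≤ n ∧ 2 * n + 1 ≤ N ∧ N ≤ 2 * n + 2 :=
    ⟨(N - 1) / 2, by omega, by omega, by omega⟩
  have hpow {i j : ℕ} (hij : i < 8 * j) : T ^ i < r ^ j :=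
    calc T ^ i < T ^ (8 * j) := pow_lt_pow_right₀ hT hij
      _ = (T ^ 8) ^ j := pow_mul T 8 j
      _ ≤ r ^ j := by gcongr
  have : 0 < T := by linarith
  refine ⟨n, ?_, ?_⟩
  · calc R * T ^ (n + 1) < r ^ (N + 1) * T ^ (n + 1) := by gcongr
      _ ≤ r ^ (2 * n + 3) * r ^ (n - 1) :=
          mul_le_mul (pow_le_pow_right₀ hr1.le (by omega)) (hpow (by omega)).le
            (by positivity) (by positivity)
      _ = r ^ (3 * n + 2) := by rw [← pow_add]; congr 1; omega
  · calc r ^ (3 * n + 4) * T ^ (n + 2) < r ^ (3 * n + 4) * r ^ (n - 2) := by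
          gcongr
          exact hpow (by omega)
      _ = r ^ (2 * (2 * n + 1)) := by rw [← pow_add]; congr 1; omega
      _ ≤ r ^ (2 * N) := pow_le_pow_right₀ hr1.le (by omega)
      _ = (r ^ N) ^ 2 := by rw [mul_comm, pow_mul]
      _ ≤ R ^ 2 := by gcongr

lemma pade_terms_lt_one {T r R : ℝ} (hT : 243 ≤ T) (hr : 0 < r) (hR : 0 < R) {n : ℕ}
    (hlow : R * T ^ (n + 1) < r ^ (3 * n + 2)) (hhigh : r ^ (3 * n + 1) * T ^ (n + 1) < R ^ 2) :
    54 * (R / r ^ 2 * (T / r ^ 3) ^ n) + 18 * (r * (243 * r ^ 3) ^ n / R ^ 2) < 1 := by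
  have hfirst : 108 * (R / r ^ 2 * (T / r ^ 3) ^ n) < 1 := by
    rw [show 108 * (R / r ^ 2 * (T / r ^ 3) ^ n) = R * (108 * T ^ n) / r ^ (3 * n + 2) by
      rw [div_pow, ← pow_mul, pow_add]; field_simp, div_lt_one (by positivity)]
    refine lt_of_le_of_lt ?_ hlow
    rw [pow_succ']
    gcongr
    linarith
  have hsecond : 36 * (r * (243 * r ^ 3) ^ n / R ^ 2) < 1 := by
    rw [show 36 * (r * (243 * r ^ 3) ^ n / R ^ 2) = r ^ (3 * n + 1) * (36 * 243 ^ n) / R ^ 2 by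
      rw [mul_pow, ← pow_mul, pow_succ]; ring, div_lt_one (by positivity)]
    refine lt_of_le_of_lt ?_ hhigh
    rw [pow_succ' T]
    gcongr
    linarith
  linarith

variable {k x₁ y₁ x₂ y₂ : ℤ} {s u₁ v₁ u₂ v₂ : ℂ}

lemma IsLargePoint.left_ne_zero (h : IsLargePoint k s x₁ y₁ u₁ v₁) : u₁ ≠ 0 := by
  rintro rfl
  have hx : (x₁ : ℂ) = 0 := by rw [← h.mul_eq, zero_mul]
  have := h.ten_pow_le
  norm_num [Int.cast_eq_zero.1 hx] at this

lemma IsLargePoint.right_ne_zero (h : IsLargePoint k s x₁ y₁ u₁ v₁) : v₁ ≠ 0 := by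
  rintro rfl
  have hx : (x₁ : ℂ) = 0 := by rw [← h.mul_eq, mul_zero]
  have := h.ten_pow_le
  norm_num [Int.cast_eq_zero.1 hx] at this

lemma IsLargePoint.cubes_ne (h : IsLargePoint k s x₁ y₁ u₁ v₁) : v₁ ^ 3 ≠ u₁ ^ 3 := by
  intro heq
  rw [h.left_cube, h.right_cube] at heq
  have hs : s = 0 := by linear_combination (-1 / 2 : ℂ) * heq
  simpa [hs] using h.norm_pos

lemma IsLargePoint.norm_sub_le_norm_right (h : IsLargePoint k s x₁ y₁ u₁ v₁) :
    ‖u₁ - v₁‖ ≤ ‖v₁‖ := by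
  have hx := h.ten_pow_le
  have hk : |(k : ℝ)| ≤ 8 * x₁ := by exact_mod_cast h.abs_le
  refine le_of_pow_le_pow_left₀ two_ne_zero (norm_nonneg _) ?_
  calc ‖u₁ - v₁‖ ^ 2 ≤ (6 * ‖s‖ / √(x₁ : ℝ) ^ 2) ^ 2 := by
        gcongr
        exact h.norm_sub_le_div
    _ = 36 * |(k : ℝ)| / x₁ ^ 2 := by
        rw [div_pow, mul_pow, h.norm_sq_eq, h.sqrt_sq]
        norm_num
    _ ≤ x₁ / 2 := by
        rw [div_le_div_iff₀ (by positivity) (by norm_num)]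
        nlinarith [sq_nonneg (x₁ : ℝ)]
    _ ≤ ‖v₁‖ ^ 2 := h.le_norm_right_sq

lemma norm_padeLinearForm_le (h₁ : IsLargePoint k s x₁ y₁ u₁ v₁)
    (h₂ : IsLargePoint k s x₂ y₂ u₂ v₂) (n : ℕ) :
    ‖padeLinearForm n u₁ v₁ u₂ v₂‖ ≤
      ‖s‖ * (54 * (√(x₂ : ℝ) / √(x₁ : ℝ) ^ 2 * (31104 * |(k : ℝ)| / √(x₁ : ℝ) ^ 3) ^ n) +
        18 * (√(x₁ : ℝ) * (243 * √(x₁ : ℝ) ^ 3) ^ n / √(x₂ : ℝ) ^ 2)) := by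
  set r := √(x₁ : ℝ)
  set R := √(x₂ : ℝ)
  have hr0 : 0 < r := by linarith [h₁.le_sqrt]
  have hu₁ : ‖u₁‖ ≤ 3 / 2 * r := h₁.norm_left_le
  have hv₁ : ‖v₁‖ ≤ 3 / 2 * r := h₁.norm_right_le
  have happrox := norm_mul_padeForm_sub_mul_padeForm_le n h₁.right_ne_zero h₁.norm_sub_le_norm_right
  have hsize : ‖padeForm n (u₁ ^ 3) (v₁ ^ 3)‖ ≤ 2 * (72 * (3 / 2 * r) ^ 3) ^ n := by
    refine norm_padeForm_le n ?_ ?_ <;> rw [norm_pow] <;> gcongr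
  have hratio : 576 * (3 / 2 * r) * (6 * ‖s‖ / r ^ 2) ^ 2 = 31104 * |(k : ℝ)| / r ^ 3 := by
    rw [← h₁.norm_sq_eq]
    field_simp
    ring
  rw [padeLinearForm_eq, mul_add]
  refine (norm_add_le _ _).trans (add_le_add ?_ ?_)
  · rw [norm_mul]
    calc _ ≤ 3 / 2 * R * (6 * 576 ^ n *
            ((3 / 2 * r) ^ n * (6 * ‖s‖ / r ^ 2) ^ (2 * n + 1))) := by
          refine mul_le_mul h₂.norm_left_le (happrox.trans ?_) (norm_nonneg _) (by positivity)
          gcongr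
          exact h₁.norm_sub_le_div
      _ = ‖s‖ * (54 * (R / r ^ 2 * (576 * (3 / 2 * r) * (6 * ‖s‖ / r ^ 2) ^ 2) ^ n)) := by
          rw [pow_succ, pow_mul, mul_pow _ (_ ^ 2), mul_pow 576]
          ring
      _ = _ := by rw [hratio]
  · rw [norm_mul, norm_mul]
    calc _ ≤ 3 / 2 * r * (2 * (72 * (3 / 2 * r) ^ 3) ^ n) * (6 * ‖s‖ / R ^ 2) := by
          gcongr
          exact h₂.norm_sub_le_div
      _ = _ := by
          rw [show 72 * (3 / 2 * r) ^ 3 = 243 * r ^ 3 by ring]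
          ring

lemma norm_le_norm_padeLinearForm (h₁ : IsLargePoint k s x₁ y₁ u₁ v₁) {m l : ℤ}
    (hdiff : u₁ * v₂ - u₂ * v₁ = 2 * s * m) (hsum : u₁ * v₂ + u₂ * v₁ = l) {n : ℕ}
    (hne : padeLinearForm n u₁ v₁ u₂ v₂ ≠ 0) : ‖s‖ ≤ ‖padeLinearForm n u₁ v₁ u₂ v₂‖ := by
  obtain ⟨a, b, hab, hab'⟩ := padeForm_conj_mem_quadratic n h₁.sq_eq y₁
  have hform : padeLinearForm n u₁ v₁ u₂ v₂ = s * ((-(2 * a * m + b * l) : ℤ) : ℂ) := by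
    unfold padeLinearForm
    rw [h₁.left_cube, h₁.right_cube, hab, hab']
    push_cast
    linear_combination -(a : ℂ) * hdiff - b * s * hsum
  have hint : -(2 * a * m + b * l) ≠ 0 := by
    intro h0
    rw [hform, h0, Int.cast_zero, mul_zero] at hne
    exact hne rfl
  rw [hform, norm_mul, Complex.norm_intCast]
  exact le_mul_of_one_le_right (norm_nonneg s) (by exact_mod_cast Int.one_le_abs hint)

lemma padeLinearForm_eq_zero (h₁ : IsLargePoint k s x₁ y₁ u₁ v₁)
    (h₂ : IsLargePoint k s x₂ y₂ u₂ v₂) {m l : ℤ} (hdiff : u₁ * v₂ - u₂ * v₁ = 2 * s * m)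
    (hsum : u₁ * v₂ + u₂ * v₁ = l) {n : ℕ}
    (hlow : √(x₂ : ℝ) * (31104 * |(k : ℝ)|) ^ (n + 1) < √(x₁ : ℝ) ^ (3 * n + 2))
    (hhigh : √(x₁ : ℝ) ^ (3 * n + 1) * (31104 * |(k : ℝ)|) ^ (n + 1) < √(x₂ : ℝ) ^ 2) :
    padeLinearForm n u₁ v₁ u₂ v₂ = 0 := by
  by_contra hne
  have hk : (10 : ℝ) ^ 12 ≤ |(k : ℝ)| := by exact_mod_cast h₁.le_abs
  have hsmall := pade_terms_lt_one (by linarith) (by linarith [h₁.le_sqrt])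
    (by linarith [h₂.le_sqrt]) hlow hhigh
  have hlt := mul_lt_mul_of_pos_left hsmall h₁.norm_pos
  linarith [norm_padeLinearForm_le h₁ h₂ n, norm_le_norm_padeLinearForm h₁ hdiff hsum hne]

lemma lt_pow_seven_of_isLargePoint (h₁ : IsLargePoint k s x₁ y₁ u₁ v₁)
    (h₂ : IsLargePoint k s x₂ y₂ u₂ v₂) {m l : ℤ} (hdiff : u₁ * v₂ - u₂ * v₁ = 2 * s * m)
    (hsum : u₁ * v₂ + u₂ * v₁ = l) (hbig : (31104 * |k|) ^ 16 ≤ x₁) : x₂ < x₁ ^ 7 := by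
  by_contra! hfar
  have hk : (10 : ℝ) ^ 12 ≤ |(k : ℝ)| := by exact_mod_cast h₁.le_abs
  set T : ℝ := 31104 * |(k : ℝ)| with hT
  have hT1 : 1 < T := by linarith
  set r := √(x₁ : ℝ)
  have hTr : T ^ 8 ≤ r := by
    apply Real.le_sqrt_of_sq_le
    rw [← pow_mul, hT]
    exact_mod_cast hbig
  have hrR : r ^ 7 ≤ √(x₂ : ℝ) := by
    apply Real.le_sqrt_of_sq_le
    rw [pow_right_comm, h₁.sqrt_sq]
    exact_mod_cast hfar
  have hr1 : 1 ≤ r := by linarith [h₁.le_sqrt]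
  have hTr1 : T ≤ r := (le_self_pow₀ hT1.le (by norm_num)).trans hTr
  obtain ⟨n, hlow, hhigh⟩ := exists_mul_pow_lt_and_lt_sq hT1 hTr hrR
  rcases padeLinearForm_ne_zero_or_succ_ne_zero n h₁.left_ne_zero h₁.right_ne_zero
    h₂.right_ne_zero h₁.cubes_ne (u₂ := u₂) with hne | hne
  · refine hne (padeLinearForm_eq_zero h₁ h₂ hdiff hsum hlow (lt_of_le_of_lt ?_ hhigh))
    exact mul_le_mul (pow_le_pow_right₀ hr1 (by omega)) (pow_le_pow_right₀ hT1.le (by omega))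
      (by positivity) (by positivity)
  · refine hne (padeLinearForm_eq_zero h₁ h₂ hdiff hsum ?_ hhigh)
    calc √(x₂ : ℝ) * T ^ (n + 1 + 1) = √(x₂ : ℝ) * T ^ (n + 1) * T := by ring
      _ < r ^ (3 * n + 2) * r := mul_lt_mul hlow hTr1 (by linarith) (by positivity)
      _ = r ^ (3 * n + 3) := by ring
      _ ≤ r ^ (3 * (n + 1) + 2) := pow_le_pow_right₀ hr1 (by omega)

end ThuePrinciple

section Chains

lemma pow_two_pow_le_of_sq_le {n : ℕ} {w : ℕ → ℝ} (hstep : ∀ i < n, w i ^ 2 ≤ w (i + 1)) {i j : ℕ}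
    (hi : 0 ≤ w i) (hij : i + j ≤ n) : w i ^ 2 ^ j ≤ w (i + j) := by
  induction j with
  | zero => simp
  | succ j ih =>
    calc w i ^ 2 ^ (j + 1) = (w i ^ 2 ^ j) ^ 2 := by rw [pow_succ 2, pow_mul]
      _ ≤ w (i + j) ^ 2 := by
          gcongr
          exact ih (by omega)
      _ ≤ w (i + (j + 1)) := hstep _ (by omega)

lemma exists_strictMono_mem_of_lt_card {S : Finset ℤ} {n : ℕ} (hn : n < #S) :
    ∃ f : ℕ → ℤ, (∀ i ≤ n, f i ∈ S) ∧ ∀ i j, i < j → j ≤ n → f i < f j := by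
  let e := S.orderEmbOfCardLe hn
  refine ⟨fun i => if h : i < n + 1 then e ⟨i, h⟩ else 0, fun i hi => ?_, fun i j hij hj => ?_⟩
  · simp only [dif_pos (Nat.lt_succ_of_le hi)]
    exact S.orderEmbOfCardLe_mem hn _
  · simp only [dif_pos (show i < n + 1 by omega), dif_pos (show j < n + 1 by omega)]
    exact e.strictMono hij

/- Five squarings reach `(31104 * K) ^ 16`, and three more pass the seventh power with room to
spare. -/
lemma pow_sixteen_le_and_pow_seven_le_of_sq_le {K : ℝ} (hK : 10 ^ 12 ≤ K) {w : ℕ → ℝ}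
    (hw0 : K / 800 ≤ w 0) (hstep : ∀ i < 8, w i ^ 2 ≤ w (i + 1)) :
    (31104 * K) ^ 16 ≤ w 5 ∧ 10 ^ 12 * w 5 ^ 7 ≤ w 8 := by
  have hw5 : (31104 * K) ^ 16 ≤ w 5 := by
    calc (31104 * K) ^ 16 ≤ ((K / 800) ^ 2) ^ 16 := by
          gcongr
          nlinarith
      _ ≤ (w 0 ^ 2) ^ 16 := by gcongr
      _ = w 0 ^ 2 ^ 5 := by rw [← pow_mul]; norm_num
      _ ≤ w 5 := by simpa using pow_two_pow_le_of_sq_le hstep (by linarith) (j := 5) (by norm_num)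
  have hw5' : (10 : ℝ) ^ 16 ≤ w 5 := le_trans (by gcongr; linarith) hw5
  refine ⟨hw5, ?_⟩
  calc 10 ^ 12 * w 5 ^ 7 ≤ w 5 * w 5 ^ 7 := by gcongr; linarith
    _ = w 5 ^ 2 ^ 3 := by ring
    _ ≤ w 8 := pow_two_pow_le_of_sq_le hstep (by linarith) (by norm_num)

lemma card_le_eight_of_gaps {k : ℤ} (hk : 10 ^ 12 ≤ |k|) {S : Finset ℤ}
    (hlarge : ∀ x ∈ S, |k| ≤ 8 * x) (hgap : ∀ a ∈ S, ∀ b ∈ S, a < b → a ^ 2 ≤ 100 * b)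
    (hfar : ∀ a ∈ S, ∀ b ∈ S, a < b → (31104 * |k|) ^ 16 ≤ a → b < a ^ 7) : #S ≤ 8 := by
  by_contra! hcard
  obtain ⟨f, hfS, hf⟩ := exists_strictMono_mem_of_lt_card hcard
  set w : ℕ → ℝ := fun i => (f i : ℝ) / 100 with hw
  have hfw (i : ℕ) : (f i : ℝ) = 100 * w i := by simp only [hw]; ring
  have hkR : (10 : ℝ) ^ 12 ≤ |(k : ℝ)| := by exact_mod_cast hk
  have hstep : ∀ i < 8, w i ^ 2 ≤ w (i + 1) := by
    intro i hi
    have hgap' : (f i : ℝ) ^ 2 ≤ 100 * f (i + 1) := by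
      exact_mod_cast hgap _ (hfS i hi.le) _ (hfS (i + 1) hi) (hf i (i + 1) (by omega) hi)
    rw [hfw, hfw] at hgap'
    linarith
  have hw0 : |(k : ℝ)| / 800 ≤ w 0 := by
    have : |(k : ℝ)| ≤ 8 * f 0 := by exact_mod_cast hlarge _ (hfS 0 (by omega))
    rw [hfw] at this
    linarith
  obtain ⟨hw5, hw8⟩ := pow_sixteen_le_and_pow_seven_le_of_sq_le hkR hw0 hstep
  have hf5 : (31104 * |(k : ℝ)|) ^ 16 ≤ f 5 := by
    have : 0 ≤ (31104 * |(k : ℝ)|) ^ 16 := by positivity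
    rw [hfw]
    linarith
  have hf8 : (f 5 : ℝ) ^ 7 ≤ f 8 := by
    rw [hfw, hfw]
    calc (100 * w 5) ^ 7 = 100 * (10 ^ 12 * w 5 ^ 7) := by ring
      _ ≤ 100 * w 8 := by gcongr
  exact (hfar _ (hfS 5 (by norm_num)) _ (hfS 8 le_rfl) (hf 5 8 (by norm_num) le_rfl)
    (by exact_mod_cast hf5)).not_ge (by exact_mod_cast hf8)

end Chains

/-! ### Reduction of binary quadratic forms -/

section QuadraticReduction

/-- The bilinear form whose associated quadratic form is `A * x ^ 2 + 2 * B * x * y + C * y ^ 2`. -/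
def bilinForm (A B C x₁ y₁ x₂ y₂ : ℝ) : ℝ :=
  A * x₁ * x₂ + B * (x₁ * y₂ + x₂ * y₁) + C * y₁ * y₂

variable {A B C : ℝ}

lemma bilinForm_self_mul_self (x₁ y₁ x₂ y₂ : ℝ) :
    bilinForm A B C x₁ y₁ x₁ y₁ * bilinForm A B C x₂ y₂ x₂ y₂ =
      bilinForm A B C x₁ y₁ x₂ y₂ ^ 2 + (A * C - B ^ 2) * (x₁ * y₂ - x₂ * y₁) ^ 2 := by
  unfold bilinForm
  ring

lemma bilinForm_self_pos (hA : 0 < A) (hD : 0 < A * C - B ^ 2) {x y : ℝ} (hxy : x ≠ 0 ∨ y ≠ 0) :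
    0 < bilinForm A B C x y x y := by
  have hsq : A * bilinForm A B C x y x y = (A * x + B * y) ^ 2 + (A * C - B ^ 2) * y ^ 2 := by
    unfold bilinForm
    ring
  refine pos_of_mul_pos_right (a := A) ?_ hA.le
  rw [hsq]
  rcases eq_or_ne y 0 with rfl | hy
  · have := hxy.resolve_right (by simp)
    simp only [mul_zero, add_zero]
    positivity
  · positivity

/-- The root in the upper half-plane of `A * z ^ 2 - 2 * B * z + C`, for a positive definite
form. -/
noncomputable def formRoot (A B C : ℝ) : ℂ := ⟨B / A, √(A * C - B ^ 2) / A⟩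

lemma re_mul_conj_eq_bilinForm_div (hA : 0 < A) (hD : 0 < A * C - B ^ 2) (x₁ y₁ x₂ y₂ : ℝ) :
    ((y₁ * formRoot A B C + x₁) * star (y₂ * formRoot A B C + x₂)).re =
      bilinForm A B C x₁ y₁ x₂ y₂ / A := by
  have hsqrt : √(A * C - B ^ 2) ^ 2 = A * C - B ^ 2 := Real.sq_sqrt hD.le
  simp only [formRoot, bilinForm, star_add, star_mul', Complex.star_def, Complex.conj_ofReal,
    Complex.mul_re, Complex.add_re, Complex.add_im, Complex.mul_im, Complex.conj_re,
    Complex.conj_im, Complex.ofReal_re, Complex.ofReal_im]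
  field_simp
  linear_combination y₁ * y₂ * hsqrt

lemma normSq_eq_bilinForm_div (hA : 0 < A) (hD : 0 < A * C - B ^ 2) (x y : ℝ) :
    Complex.normSq (y * formRoot A B C + x) = bilinForm A B C x y x y / A := by
  rw [← re_mul_conj_eq_bilinForm_div hA hD, Complex.star_def, Complex.mul_conj, Complex.ofReal_re]

open scoped Modular MatrixGroups in
lemma exists_moebius_mem_fundamentalDomain {z : ℂ} (hz : 0 < z.im) :
    ∃ p q r t : ℤ, p * t - q * r = 1 ∧
      1 ≤ Complex.normSq (((t : ℝ) * z + (q : ℝ)) / ((r : ℝ) * z + (p : ℝ))) ∧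
      |(((t : ℝ) * z + (q : ℝ)) / ((r : ℝ) * z + (p : ℝ))).re| ≤ 1 / 2 := by
  obtain ⟨g, hnorm, hre⟩ := ModularGroup.exists_smul_mem_fd ⟨z, hz⟩
  have hdet := g.det_coe
  rw [Matrix.det_fin_two] at hdet
  have hgz : ((g • (⟨z, hz⟩ : UpperHalfPlane) : UpperHalfPlane) : ℂ) =
      ((g 0 0 : ℝ) * z + (g 0 1 : ℝ)) / ((g 1 0 : ℝ) * z + (g 1 1 : ℝ)) := by
    simpa using UpperHalfPlane.coe_specialLinearGroup_apply g ⟨z, hz⟩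
  rw [← UpperHalfPlane.coe_re, hgz] at hre
  rw [hgz] at hnorm
  exact ⟨g 1 1, g 0 1, g 1 0, g 0 0, by linarith, hnorm, hre⟩

lemma exists_reduced_basis (hA : 0 < A) (hD : 0 < A * C - B ^ 2) :
    ∃ p q r t : ℤ, p * t - q * r = 1 ∧
      bilinForm A B C p r p r ≤ bilinForm A B C q t q t ∧
      bilinForm A B C p r p r * bilinForm A B C q t q t ≤ 4 / 3 * (A * C - B ^ 2) := by
  obtain ⟨p, q, r, t, hdet, hnorm, hre⟩ := exists_moebius_mem_fundamentalDomain
    (z := formRoot A B C) (div_pos (Real.sqrt_pos.2 hD) hA)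
  have hdetR : (p : ℝ) * t - q * r = 1 := by exact_mod_cast hdet
  have hpos : 0 < bilinForm A B C p r p r := by
    refine bilinForm_self_pos hA hD ?_
    by_contra! ⟨hp0, hr0⟩
    simp [hp0, hr0] at hdetR
  rw [Complex.normSq_div, normSq_eq_bilinForm_div hA hD, normSq_eq_bilinForm_div hA hD,
    div_div_div_cancel_right₀ hA.ne', one_le_div hpos] at hnorm
  refine ⟨p, q, r, t, hdet, hnorm, ?_⟩
  rw [div_eq_mul_inv, Complex.inv_def, ← mul_assoc,
    Complex.re_mul_ofReal, ← Complex.star_def, re_mul_conj_eq_bilinForm_div hA hD,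
    normSq_eq_bilinForm_div hA hD, inv_div, div_mul_div_cancel₀ hA.ne', abs_div, abs_of_pos hpos,
    div_le_iff₀ hpos] at hre
  have hmixed : bilinForm A B C q t p r ^ 2 ≤ (1 / 2 * bilinForm A B C p r p r) ^ 2 := by
    rw [← sq_abs]
    gcongr
  have hlagrange := bilinForm_self_mul_self (A := A) (B := B) (C := C) q t p r
  have hdet_sq : (q * r - p * t : ℝ) ^ 2 = 1 := by
    linear_combination (p * t - q * r + 1) * hdetR
  rw [hdet_sq] at hlagrange
  nlinarith

end QuadraticReduction

/-! ### Binary cubic forms -/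

/-- The binary cubic form `a * X ^ 3 + 3 * b * X ^ 2 * Y + 3 * c * X * Y ^ 2 + d * Y ^ 3` with
integer coefficients. -/
@[ext]
structure BinaryCubic where
  a : ℤ
  b : ℤ
  c : ℤ
  d : ℤ

namespace BinaryCubic

variable (f : BinaryCubic)

/-- The symmetric trilinear form of a binary cubic form. -/
def polar (p₁ q₁ p₂ q₂ p₃ q₃ : ℤ) : ℤ :=
  f.a * p₁ * p₂ * p₃ + f.b * (p₁ * p₂ * q₃ + p₁ * q₂ * p₃ + q₁ * p₂ * p₃) +
    f.c * (p₁ * q₂ * q₃ + q₁ * p₂ * q₃ + q₁ * q₂ * p₃) + f.d * q₁ * q₂ * q₃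

/-- The value of a binary cubic form. -/
def eval (p q : ℤ) : ℤ :=
  f.polar p q p q p q

/-- The bilinear form of the Hessian, normalised so that its diagonal is twice `hessian`. -/
def hessianPolar (p₁ q₁ p₂ q₂ : ℤ) : ℤ :=
  2 * (f.b ^ 2 - f.a * f.c) * p₁ * p₂ + (f.b * f.c - f.a * f.d) * (p₁ * q₂ + p₂ * q₁) +
    2 * (f.c ^ 2 - f.b * f.d) * q₁ * q₂

/-- The Hessian covariant of a binary cubic form. -/
def hessian (p q : ℤ) : ℤ :=
  (f.b ^ 2 - f.a * f.c) * p ^ 2 + (f.b * f.c - f.a * f.d) * p * q + (f.c ^ 2 - f.b * f.d) * q ^ 2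

/-- The discriminant of the Hessian, which is the discriminant of the cubic form up to the factor
`-27`. -/
def discr : ℤ :=
  (f.b * f.c - f.a * f.d) ^ 2 - 4 * (f.b ^ 2 - f.a * f.c) * (f.c ^ 2 - f.b * f.d)

/-- The form `f (p * X + q * Y, r * X + t * Y)`. -/
def subst (p q r t : ℤ) : BinaryCubic where
  a := f.polar p r p r p r
  b := f.polar p r p r q t
  c := f.polar p r q t q t
  d := f.polar q t q t q t

/-- The form `f` takes the value `1` at a point where its Hessian is `x`. By Mordell's
correspondence this happens for the integral points with abscissa `x`. -/
def Represents (x : ℤ) : Prop :=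
  ∃ p q : ℤ, f.eval p q = 1 ∧ f.hessian p q = x

variable {f}

lemma eq_of_eval_eq_one_of_parallel {p q p' q' : ℤ} (h : f.eval p q = 1) (h' : f.eval p' q' = 1)
    (hpar : p * q' = p' * q) : p = p' ∧ q = q' := by
  have hcube : Function.Injective fun z : ℤ => z ^ 3 :=
    (Odd.strictMono_pow (by decide : Odd 3)).injective
  unfold eval polar at h h'
  refine ⟨hcube ?_, hcube ?_⟩ <;> dsimp only
  · linear_combination p' ^ 3 * h - p ^ 3 * h' + (3 * f.b * p ^ 2 * p' ^ 2 +
      3 * f.c * p * p' * (p * q' + p' * q) +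
      f.d * ((p * q') ^ 2 + p * q' * (p' * q) + (p' * q) ^ 2)) * hpar
  · linear_combination q' ^ 3 * h - q ^ 3 * h' - (3 * f.c * q ^ 2 * q' ^ 2 +
      3 * f.b * q * q' * (p * q' + p' * q) +
      f.a * ((p * q') ^ 2 + p * q' * (p' * q) + (p' * q) ^ 2)) * hpar

end BinaryCubic

/-- The factorisation `2 * s * f = U ^ 3 - V ^ 3` of a binary cubic form into cubes of the linear
forms `U = u₁ * X + u₂ * Y` and `V = v₁ * X + v₂ * Y` of determinant `2 * s`. -/
structure CubeSplitting (f : BinaryCubic) (s : ℂ) where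
  u₁ : ℂ
  u₂ : ℂ
  v₁ : ℂ
  v₂ : ℂ
  two_mul_a : 2 * s * f.a = u₁ ^ 3 - v₁ ^ 3
  two_mul_b : 2 * s * f.b = u₁ ^ 2 * u₂ - v₁ ^ 2 * v₂
  two_mul_c : 2 * s * f.c = u₁ * u₂ ^ 2 - v₁ * v₂ ^ 2
  two_mul_d : 2 * s * f.d = u₂ ^ 3 - v₂ ^ 3
  det_eq : u₁ * v₂ - u₂ * v₁ = 2 * s

namespace CubeSplitting

open BinaryCubic

variable {f : BinaryCubic} {s : ℂ} (S : CubeSplitting f s)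

/-- The value of the linear form `U`. -/
def left (p q : ℤ) : ℂ :=
  S.u₁ * p + S.u₂ * q

/-- The value of the linear form `V`. -/
def right (p q : ℤ) : ℂ :=
  S.v₁ * p + S.v₂ * q

lemma two_mul_polar (p₁ q₁ p₂ q₂ p₃ q₃ : ℤ) : 2 * s * f.polar p₁ q₁ p₂ q₂ p₃ q₃ =
    S.left p₁ q₁ * S.left p₂ q₂ * S.left p₃ q₃ -
      S.right p₁ q₁ * S.right p₂ q₂ * S.right p₃ q₃ := by
  unfold polar left right
  push_cast
  linear_combination (p₁ * p₂ * p₃ : ℂ) * S.two_mul_a +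
    (p₁ * p₂ * q₃ + p₁ * q₂ * p₃ + q₁ * p₂ * p₃ : ℂ) * S.two_mul_b +
    (p₁ * q₂ * q₃ + q₁ * p₂ * q₃ + q₁ * q₂ * p₃ : ℂ) * S.two_mul_c +
    (q₁ * q₂ * q₃ : ℂ) * S.two_mul_d

lemma left_pow_sub_right_pow (p q : ℤ) :
    S.left p q ^ 3 - S.right p q ^ 3 = 2 * s * f.eval p q := by
  rw [BinaryCubic.eval, S.two_mul_polar]
  ring

lemma left_mul_right_sub (p₁ q₁ p₂ q₂ : ℤ) :
    S.left p₁ q₁ * S.right p₂ q₂ - S.left p₂ q₂ * S.right p₁ q₁ =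
      2 * s * ((p₁ * q₂ - p₂ * q₁ : ℤ) : ℂ) := by
  unfold left right
  push_cast
  linear_combination (p₁ * q₂ - p₂ * q₁ : ℂ) * S.det_eq

lemma hessian_coeffs (hs : s ≠ 0) : S.u₁ * S.v₁ = (f.b ^ 2 - f.a * f.c : ℤ) ∧
    S.u₁ * S.v₂ + S.u₂ * S.v₁ = (f.b * f.c - f.a * f.d : ℤ) ∧
    S.u₂ * S.v₂ = (f.c ^ 2 - f.b * f.d : ℤ) := by
  have hs4 : 4 * s ^ 2 ≠ 0 := by simpa using hs
  have hdet : (S.u₁ * S.v₂ - S.u₂ * S.v₁) ^ 2 = 4 * s ^ 2 := by rw [S.det_eq]; ring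
  refine ⟨?_, ?_, ?_⟩ <;> apply mul_right_cancel₀ hs4 <;> push_cast
  · calc S.u₁ * S.v₁ * (4 * s ^ 2) = (S.u₁ ^ 2 * S.u₂ - S.v₁ ^ 2 * S.v₂) ^ 2 -
          (S.u₁ ^ 3 - S.v₁ ^ 3) * (S.u₁ * S.u₂ ^ 2 - S.v₁ * S.v₂ ^ 2) := by rw [← hdet]; ring
      _ = _ := by rw [← S.two_mul_a, ← S.two_mul_b, ← S.two_mul_c]; ring
  · calc (S.u₁ * S.v₂ + S.u₂ * S.v₁) * (4 * s ^ 2) = (S.u₁ ^ 2 * S.u₂ - S.v₁ ^ 2 * S.v₂) *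
          (S.u₁ * S.u₂ ^ 2 - S.v₁ * S.v₂ ^ 2) -
          (S.u₁ ^ 3 - S.v₁ ^ 3) * (S.u₂ ^ 3 - S.v₂ ^ 3) := by rw [← hdet]; ring
      _ = _ := by rw [← S.two_mul_a, ← S.two_mul_b, ← S.two_mul_c, ← S.two_mul_d]; ring
  · calc S.u₂ * S.v₂ * (4 * s ^ 2) = (S.u₁ * S.u₂ ^ 2 - S.v₁ * S.v₂ ^ 2) ^ 2 -
          (S.u₁ ^ 2 * S.u₂ - S.v₁ ^ 2 * S.v₂) * (S.u₂ ^ 3 - S.v₂ ^ 3) := by rw [← hdet]; ring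
      _ = _ := by rw [← S.two_mul_b, ← S.two_mul_c, ← S.two_mul_d]; ring

lemma left_mul_right_add (hs : s ≠ 0) (p₁ q₁ p₂ q₂ : ℤ) :
    S.left p₁ q₁ * S.right p₂ q₂ + S.left p₂ q₂ * S.right p₁ q₁ = f.hessianPolar p₁ q₁ p₂ q₂ := by
  obtain ⟨h₁, h₂, h₃⟩ := S.hessian_coeffs hs
  unfold left right hessianPolar
  push_cast at *
  linear_combination 2 * (p₁ * p₂ : ℂ) * h₁ + (p₁ * q₂ + p₂ * q₁ : ℂ) * h₂ +
    2 * (q₁ * q₂ : ℂ) * h₃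

lemma left_mul_right (hs : s ≠ 0) (p q : ℤ) : S.left p q * S.right p q = f.hessian p q := by
  have hpolar : f.hessianPolar p q p q = 2 * f.hessian p q := by
    unfold hessianPolar hessian
    ring
  have hadd := S.left_mul_right_add hs p q p q
  rw [hpolar] at hadd
  push_cast at hadd
  linear_combination hadd / 2

include S in
lemma discr_eq (hs : s ≠ 0) : (f.discr : ℂ) = 4 * s ^ 2 := by
  obtain ⟨h₁, h₂, h₃⟩ := S.hessian_coeffs hs
  have hdiscr : (f.discr : ℂ) = (S.u₁ * S.v₂ + S.u₂ * S.v₁) ^ 2 -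
      4 * (S.u₁ * S.v₁) * (S.u₂ * S.v₂) := by
    rw [h₁, h₂, h₃, BinaryCubic.discr]
    push_cast
    ring
  rw [hdiscr]
  linear_combination (S.u₁ * S.v₂ - S.u₂ * S.v₁ + 2 * s) * S.det_eq

/-- The splitting of `f.subst p q r t` induced by an integral change of variables of determinant
`1`. -/
def subst {p q r t : ℤ} (hdet : p * t - q * r = 1) : CubeSplitting (f.subst p q r t) s where
  u₁ := S.left p r
  u₂ := S.left q t
  v₁ := S.right p r
  v₂ := S.right q t
  two_mul_a := (S.two_mul_polar p r p r p r).trans (by ring)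
  two_mul_b := (S.two_mul_polar p r p r q t).trans (by ring)
  two_mul_c := (S.two_mul_polar p r q t q t).trans (by ring)
  two_mul_d := (S.two_mul_polar q t q t q t).trans (by ring)
  det_eq := by rw [S.left_mul_right_sub, hdet, Int.cast_one, mul_one]

include S in
lemma represents_subst (hs : s ≠ 0) {p q r t : ℤ} (hdet : p * t - q * r = 1) {x : ℤ}
    (hone : f.eval 1 0 = 1) (hx : f.hessian 1 0 = x) : (f.subst p q r t).Represents x := by
  have hdetC : (p * t - q * r : ℂ) = 1 := by exact_mod_cast hdet
  have hleft : (S.subst hdet).left t (-r) = S.left 1 0 := by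
    simp only [left, subst]
    push_cast
    linear_combination S.u₁ * hdetC
  have hright : (S.subst hdet).right t (-r) = S.right 1 0 := by
    simp only [right, subst]
    push_cast
    linear_combination S.v₁ * hdetC
  refine ⟨t, -r, ?_, ?_⟩
  · have hcubes := (S.subst hdet).left_pow_sub_right_pow t (-r)
    rw [hleft, hright, S.left_pow_sub_right_pow, hone] at hcubes
    exact_mod_cast (mul_left_cancel₀ (mul_ne_zero two_ne_zero hs) hcubes).symm
  · have hmul := (S.subst hdet).left_mul_right hs t (-r)
    rw [hleft, hright, S.left_mul_right hs, hx] at hmul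
    exact_mod_cast hmul.symm

end CubeSplitting

/-! ### Reduced forms attached to integral points -/

section CubeRoots

variable {k x y : ℤ} {s : ℂ}

lemma ne_zero_of_sq_eq_intCast (hk : k ≠ 0) (hs : s ^ 2 = k) : s ≠ 0 := by
  rintro rfl
  exact hk (by simpa using hs.symm)

lemma exists_real_pow_three_eq (t : ℝ) : ∃ z : ℝ, z ^ 3 = t := by
  rcases le_total 0 t with ht | ht
  · exact ⟨_, Real.rpow_inv_natCast_pow ht three_ne_zero⟩
  · obtain ⟨z, hz⟩ : ∃ z : ℝ, z ^ 3 = -t :=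
      ⟨_, Real.rpow_inv_natCast_pow (neg_nonneg.2 ht) three_ne_zero⟩
    exact ⟨-z, by rw [Odd.neg_pow (by decide), hz, neg_neg]⟩

lemma mul_eq_cube (hs : s ^ 2 = k) (hxy : y ^ 2 = x ^ 3 + k) :
    ((y : ℂ) + s) * (y - s) = (x : ℂ) ^ 3 := by
  have hxyC : (y : ℂ) ^ 2 = x ^ 3 + k := by exact_mod_cast hxy
  linear_combination hxyC - hs

lemma exists_cube_roots_of_conj_eq_neg (hs : s ^ 2 = k) (hconj : star s = -s)
    (hxy : y ^ 2 = x ^ 3 + k) : ∃ ξ η : ℂ, ξ ^ 3 = y + s ∧ η ^ 3 = y - s ∧ ξ * η = x ∧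
      (ξ * star (η ^ 2) + η * star (ξ ^ 2)).im = 0 := by
  obtain ⟨ξ, hξ⟩ := IsAlgClosed.exists_pow_nat_eq ((y : ℂ) + s) three_pos
  have hstar : star ξ ^ 3 = y - s := by
    rw [← star_pow, hξ, star_add, hconj, star_intCast, sub_eq_add_neg]
  have hnorm : Complex.normSq ξ = x := by
    have hcubes : Complex.normSq ξ ^ 3 = (x : ℝ) ^ 3 := by
      have hmul : (Complex.normSq ξ : ℂ) ^ 3 = (x : ℂ) ^ 3 := by
        rw [← Complex.mul_conj, mul_pow, ← Complex.star_def, hξ, hstar, mul_eq_cube hs hxy]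
      exact_mod_cast hmul
    exact (Odd.strictMono_pow (by decide : Odd 3)).injective hcubes
  refine ⟨ξ, star ξ, hξ, hstar, ?_, ?_⟩
  · rw [Complex.star_def, Complex.mul_conj, hnorm, Complex.ofReal_intCast]
  · have hreal : ξ * star (star ξ ^ 2) + star ξ * star (ξ ^ 2) = ξ ^ 3 + star (ξ ^ 3) := by
      simp only [star_pow, star_star]
      ring
    rw [hreal, Complex.star_def, Complex.add_conj, Complex.ofReal_im]

lemma exists_cube_roots_of_conj_eq (hs : s ^ 2 = k) (hconj : star s = s) (hx : x ≠ 0)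
    (hxy : y ^ 2 = x ^ 3 + k) : ∃ ξ η : ℂ, ξ ^ 3 = y + s ∧ η ^ 3 = y - s ∧ ξ * η = x ∧
      (ξ * star (η ^ 2) + η * star (ξ ^ 2)).im = 0 := by
  obtain ⟨r, rfl⟩ := Complex.conj_eq_iff_real.1 hconj
  obtain ⟨ξ, hξ⟩ := exists_real_pow_three_eq (y + r)
  have hmul : ((y : ℝ) + r) * (y - r) = (x : ℝ) ^ 3 := by exact_mod_cast mul_eq_cube hs hxy
  have hx3 : (x : ℝ) ^ 3 ≠ 0 := by exact_mod_cast pow_ne_zero 3 hx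
  have hξ0 : ξ ≠ 0 := by
    rintro rfl
    rw [← hξ] at hmul
    exact hx3 (by linarith)
  have hη : ((x : ℝ) / ξ) ^ 3 = y - r := by
    rw [div_pow, div_eq_iff (pow_ne_zero 3 hξ0), hξ, ← hmul, mul_comm]
  refine ⟨ξ, ((x : ℝ) / ξ : ℝ), by exact_mod_cast hξ, by exact_mod_cast hη, ?_, ?_⟩
  · exact_mod_cast mul_div_cancel₀ (x : ℝ) hξ0
  · generalize (x : ℝ) / ξ = η
    simp [← Complex.ofReal_pow]

lemma exists_cube_roots (hs : s ^ 2 = k) (hx : x ≠ 0) (hxy : y ^ 2 = x ^ 3 + k) :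
    ∃ ξ η : ℂ, ξ ^ 3 = y + s ∧ η ^ 3 = y - s ∧ ξ * η = x ∧
      (ξ * star (η ^ 2) + η * star (ξ ^ 2)).im = 0 := by
  have hsq : star s ^ 2 = s ^ 2 := by rw [← star_pow, hs, star_intCast]
  rcases sq_eq_sq_iff_eq_or_eq_neg.1 hsq with hconj | hconj
  · exact exists_cube_roots_of_conj_eq hs hconj hx hxy
  · exact exists_cube_roots_of_conj_eq_neg hs hconj hxy

end CubeRoots

/-- Mordell's cubic form `X ^ 3 - 3 * x * X * Y ^ 2 - 2 * y * Y ^ 3` attached to the point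
`(x, y)`. -/
def mordellForm (x y : ℤ) : BinaryCubic := ⟨1, 0, -x, -2 * y⟩

lemma mordellForm_eval_one_zero (x y : ℤ) : (mordellForm x y).eval 1 0 = 1 := by
  simp [mordellForm, BinaryCubic.eval, BinaryCubic.polar]

lemma mordellForm_hessian_one_zero (x y : ℤ) : (mordellForm x y).hessian 1 0 = x := by
  simp [mordellForm, BinaryCubic.hessian]

/-- The splitting of `mordellForm x y` given by cube roots `ξ` of `y + s` and `η` of `y - s`. -/
def mordellSplitting {x y : ℤ} {s ξ η : ℂ} (hξ : ξ ^ 3 = y + s) (hη : η ^ 3 = y - s)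
    (hmul : ξ * η = x) : CubeSplitting (mordellForm x y) s where
  u₁ := ξ
  u₂ := η ^ 2
  v₁ := η
  v₂ := ξ ^ 2
  two_mul_a := by
    simp only [mordellForm]
    push_cast
    linear_combination hη - hξ
  two_mul_b := by
    simp only [mordellForm]
    push_cast
    ring
  two_mul_c := by
    simp only [mordellForm]
    push_cast
    linear_combination 2 * s * hmul - ξ * η * (hη - hξ)
  two_mul_d := by
    simp only [mordellForm]
    push_cast
    linear_combination (ξ ^ 3 + y + s) * hξ - (η ^ 3 + y - s) * hη
  det_eq := by linear_combination hξ - hη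

namespace CubeSplitting

variable {f : BinaryCubic} {s : ℂ} (S : CubeSplitting f s)

/-- The sum `|U| ^ 2 + |V| ^ 2`, a positive definite quadratic form covariant with `f`. -/
noncomputable def normForm (p q : ℤ) : ℝ :=
  ‖S.left p q‖ ^ 2 + ‖S.right p q‖ ^ 2

lemma normForm_nonneg (p q : ℤ) : 0 ≤ S.normForm p q := by
  unfold normForm
  positivity

lemma normForm_eq_bilinForm (p q : ℤ) : S.normForm p q =
    bilinForm (‖S.u₁‖ ^ 2 + ‖S.v₁‖ ^ 2) (S.u₁ * star S.u₂ + S.v₁ * star S.v₂).re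
      (‖S.u₂‖ ^ 2 + ‖S.v₂‖ ^ 2) p q p q := by
  simp only [normForm, left, right, bilinForm, Complex.sq_norm, Complex.normSq_apply,
    Complex.star_def, Complex.add_re, Complex.add_im, Complex.mul_re, Complex.mul_im,
    Complex.conj_re, Complex.conj_im, Complex.intCast_re, Complex.intCast_im]
  ring

lemma normForm_det (hreal : (S.u₁ * star S.u₂ + S.v₁ * star S.v₂).im = 0) :
    (‖S.u₁‖ ^ 2 + ‖S.v₁‖ ^ 2) * (‖S.u₂‖ ^ 2 + ‖S.v₂‖ ^ 2) -
      (S.u₁ * star S.u₂ + S.v₁ * star S.v₂).re ^ 2 = 4 * ‖s‖ ^ 2 := by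
  calc
    _ = ‖S.u₁ * S.v₂ - S.u₂ * S.v₁‖ ^ 2 + (S.u₁ * star S.u₂ + S.v₁ * star S.v₂).im ^ 2 := by
      simp only [Complex.sq_norm, Complex.normSq_apply, Complex.star_def, Complex.add_re,
        Complex.add_im, Complex.sub_re, Complex.sub_im, Complex.mul_re, Complex.mul_im,
        Complex.conj_re, Complex.conj_im]
      ring
    _ = 4 * ‖s‖ ^ 2 := by
      rw [hreal, S.det_eq, norm_mul, Complex.norm_ofNat]
      ring

lemma exists_reduced_subst (hs : s ≠ 0)
    (hreal : (S.u₁ * star S.u₂ + S.v₁ * star S.v₂).im = 0) :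
    ∃ p q r t : ℤ, p * t - q * r = 1 ∧ S.normForm p r ≤ S.normForm q t ∧
      S.normForm p r * S.normForm q t ≤ 16 / 3 * ‖s‖ ^ 2 := by
  have hlead : 0 < ‖S.u₁‖ ^ 2 + ‖S.v₁‖ ^ 2 := by
    by_contra! hle
    have hu : S.u₁ = 0 := by simpa using (by nlinarith : ‖S.u₁‖ ^ 2 = 0)
    have hv : S.v₁ = 0 := by simpa using (by nlinarith : ‖S.v₁‖ ^ 2 = 0)
    have hdet := S.det_eq
    rw [hu, hv] at hdet
    simp [hs] at hdet
  have hpos : 0 < 4 * ‖s‖ ^ 2 := by positivity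
  have hdet := S.normForm_det hreal
  obtain ⟨p, q, r, t, hone, hle, hmul⟩ := exists_reduced_basis hlead (hpos.trans_eq hdet.symm)
  rw [hdet] at hmul
  simp only [← S.normForm_eq_bilinForm] at hle hmul
  exact ⟨p, q, r, t, hone, hle, hmul.trans_eq (by ring)⟩

end CubeSplitting

lemma sq_mul_add_sq_mul_sq_le (α β γ δ : ℝ) :
    (α ^ 2 * γ + β ^ 2 * δ) ^ 2 ≤ (α ^ 2 + β ^ 2) ^ 2 * (γ ^ 2 + δ ^ 2) := by
  calc (α ^ 2 * γ + β ^ 2 * δ) ^ 2 ≤ (α ^ 4 + β ^ 4) * (γ ^ 2 + δ ^ 2) := by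
        nlinarith [sq_nonneg (α ^ 2 * δ - β ^ 2 * γ)]
    _ ≤ (α ^ 2 + β ^ 2) ^ 2 * (γ ^ 2 + δ ^ 2) := by
        gcongr
        nlinarith [mul_nonneg (sq_nonneg α) (sq_nonneg β)]

namespace CubeSplitting

variable {f : BinaryCubic} {s : ℂ} (S : CubeSplitting f s)

lemma four_mul_sq_mul_polar_sq_le (p q p' q' : ℤ) :
    4 * ‖s‖ ^ 2 * (f.polar p q p q p' q' : ℝ) ^ 2 ≤ S.normForm p q ^ 2 * S.normForm p' q' := by
  have hnorm : ‖2 * s * f.polar p q p q p' q'‖ ≤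
      ‖S.left p q‖ ^ 2 * ‖S.left p' q'‖ + ‖S.right p q‖ ^ 2 * ‖S.right p' q'‖ := by
    rw [S.two_mul_polar, ← sq, ← sq, ← norm_pow, ← norm_pow, ← norm_mul, ← norm_mul]
    exact norm_sub_le _ _
  calc 4 * ‖s‖ ^ 2 * (f.polar p q p q p' q' : ℝ) ^ 2 = ‖2 * s * f.polar p q p q p' q'‖ ^ 2 := by
        rw [norm_mul, norm_mul, Complex.norm_intCast, Complex.norm_ofNat, mul_pow, mul_pow, sq_abs]
        norm_num
    _ ≤ (‖S.left p q‖ ^ 2 * ‖S.left p' q'‖ + ‖S.right p q‖ ^ 2 * ‖S.right p' q'‖) ^ 2 := by gcongr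
    _ ≤ S.normForm p q ^ 2 * S.normForm p' q' := sq_mul_add_sq_mul_sq_le _ _ _ _

end CubeSplitting

section CoefficientBounds

variable {K Q₁ Q₂ b c : ℝ}

lemma pow_four_le_of_reduced (hK : 0 < K) (h₁ : 0 ≤ Q₁) (hle : Q₁ ≤ Q₂)
    (hQ : Q₁ * Q₂ ≤ 16 / 3 * K) (hb : 4 * K * b ^ 2 ≤ Q₁ ^ 2 * Q₂) : b ^ 4 ≤ 10 * K := by
  have h₂ : 0 ≤ Q₂ := h₁.trans hle
  refine le_of_mul_le_mul_left ?_ (by positivity : 0 < 16 * K ^ 2)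
  calc 16 * K ^ 2 * b ^ 4 = (4 * K * b ^ 2) ^ 2 := by ring
    _ ≤ (Q₁ ^ 2 * Q₂) ^ 2 := by gcongr
    _ = Q₁ ^ 3 * Q₂ ^ 2 * Q₁ := by ring
    _ ≤ Q₁ ^ 3 * Q₂ ^ 2 * Q₂ := by gcongr
    _ = (Q₁ * Q₂) ^ 3 := by ring
    _ ≤ (16 / 3 * K) ^ 3 := by gcongr
    _ ≤ 16 * K ^ 2 * (10 * K) := by nlinarith [pow_pos hK 3]

lemma abs_pow_three_le_of_reduced (hK : 0 < K) (h₁ : 0 ≤ Q₁) (h₂ : 0 ≤ Q₂)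
    (hQ : Q₁ * Q₂ ≤ 16 / 3 * K) (ha : 4 * K ≤ Q₁ ^ 2 * Q₁) (hc : 4 * K * c ^ 2 ≤ Q₂ ^ 2 * Q₁) :
    |c| ^ 3 ≤ 10 * K := by
  rw [← abs_pow]
  refine abs_le_of_sq_le_sq (le_of_mul_le_mul_left ?_ (by positivity : 0 < 256 * K ^ 4))
    (by positivity)
  calc 256 * K ^ 4 * (c ^ 3) ^ 2 = (4 * K * c ^ 2) ^ 3 * (4 * K) := by ring
    _ ≤ (Q₂ ^ 2 * Q₁) ^ 3 * (Q₁ ^ 2 * Q₁) := by gcongr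
    _ = (Q₁ * Q₂) ^ 6 := by ring
    _ ≤ (16 / 3 * K) ^ 6 := by gcongr
    _ ≤ 256 * K ^ 4 * (10 * K) ^ 2 := by nlinarith [pow_pos hK 6]

lemma sq_le_of_reduced (hK : 0 < K) (h₁ : 0 ≤ Q₁) (h₂ : 0 ≤ Q₂)
    (hQ : Q₁ * Q₂ ≤ 16 / 3 * K) (hb : 4 * K ≤ Q₁ ^ 2 * Q₂) (hc : 4 * K * c ^ 2 ≤ Q₂ ^ 2 * Q₁) :
    c ^ 2 ≤ 10 * K := by
  refine le_of_mul_le_mul_left ?_ (by positivity : 0 < 16 * K ^ 2)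
  calc 16 * K ^ 2 * c ^ 2 = (4 * K * c ^ 2) * (4 * K) := by ring
    _ ≤ (Q₂ ^ 2 * Q₁) * (Q₁ ^ 2 * Q₂) := by gcongr
    _ = (Q₁ * Q₂) ^ 3 := by ring
    _ ≤ (16 / 3 * K) ^ 3 := by gcongr
    _ ≤ 16 * K ^ 2 * (10 * K) := by nlinarith [pow_pos hK 3]

lemma le_of_mul_intCast_sq_le {n : ℤ} {Q : ℝ} (hK : 0 < K) (hn : n ≠ 0)
    (h : 4 * K * (n : ℝ) ^ 2 ≤ Q) : 4 * K ≤ Q := by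
  have hsq : (1 : ℝ) ≤ (n : ℝ) ^ 2 := by exact_mod_cast sq_pos_of_ne_zero hn
  nlinarith

end CoefficientBounds

/-- The size conditions satisfied by a reduced binary cubic form whose Hessian has discriminant
`4 * k`. -/
structure BinaryCubic.IsReduced (f : BinaryCubic) (k : ℤ) : Prop where
  discr_eq : f.discr = 4 * k
  a_pow_le : f.a ^ 4 ≤ 10 * |k|
  b_pow_le : f.b ^ 4 ≤ 10 * |k|
  c_pow_le : f.a ≠ 0 → |f.c| ^ 3 ≤ 10 * |k|
  c_sq_le : f.a = 0 → f.c ^ 2 ≤ 10 * |k|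

lemma CubeSplitting.isReduced_subst {f : BinaryCubic} {s : ℂ} (S : CubeSplitting f s) {k : ℤ}
    (hk : k ≠ 0) (hs : s ^ 2 = k) {p q r t : ℤ} (hdet : p * t - q * r = 1)
    (hle : S.normForm p r ≤ S.normForm q t)
    (hmul : S.normForm p r * S.normForm q t ≤ 16 / 3 * ‖s‖ ^ 2) :
    (f.subst p q r t).IsReduced k := by
  have hs0 := ne_zero_of_sq_eq_intCast hk hs
  have hnorm : ‖s‖ ^ 2 = |(k : ℝ)| := by rw [← norm_pow, hs, Complex.norm_intCast]
  have hK : 0 < |(k : ℝ)| := abs_pos.2 (by exact_mod_cast hk)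
  have hpr := S.normForm_nonneg p r
  have hqt := S.normForm_nonneg q t
  have ha := S.four_mul_sq_mul_polar_sq_le p r p r
  have hb := S.four_mul_sq_mul_polar_sq_le p r q t
  have hc := S.four_mul_sq_mul_polar_sq_le q t p r
  have hpolar : f.polar q t q t p r = f.polar p r q t q t := by
    unfold BinaryCubic.polar
    ring
  rw [hpolar] at hc
  rw [hnorm] at ha hb hc hmul
  have hdiscr : (f.subst p q r t).discr = 4 * k := by
    have hdiscrC := (S.subst hdet).discr_eq hs0
    rw [hs] at hdiscrC
    exact_mod_cast hdiscrC
  refine ⟨hdiscr, ?_, ?_, fun ha0 => ?_, fun ha0 => ?_⟩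
  · exact_mod_cast pow_four_le_of_reduced hK hpr hle hmul (ha.trans (by gcongr))
  · exact_mod_cast pow_four_le_of_reduced hK hpr hle hmul hb
  · exact_mod_cast abs_pow_three_le_of_reduced hK hpr hqt hmul
      (le_of_mul_intCast_sq_le hK ha0 ha) hc
  · have hb0 : (f.subst p q r t).b ≠ 0 := by
      intro hb0
      rw [BinaryCubic.discr, ha0, hb0] at hdiscr
      exact hk (by linarith)
    exact_mod_cast sq_le_of_reduced hK hpr hqt hmul (le_of_mul_intCast_sq_le hK hb0 hb) hc

lemma exists_isReduced_represents {k x y : ℤ} {s : ℂ} (hk : k ≠ 0) (hs : s ^ 2 = k) (hx : x ≠ 0)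
    (hxy : y ^ 2 = x ^ 3 + k) :
    ∃ f : BinaryCubic, f.IsReduced k ∧ f.Represents x ∧ Nonempty (CubeSplitting f s) := by
  have hs0 := ne_zero_of_sq_eq_intCast hk hs
  obtain ⟨ξ, η, hξ, hη, hξη, hreal⟩ := exists_cube_roots hs hx hxy
  let S := mordellSplitting hξ hη hξη
  obtain ⟨p, q, r, t, hdet, hle, hmul⟩ := S.exists_reduced_subst hs0 hreal
  exact ⟨_, S.isReduced_subst hk hs hdet hle hmul,
    S.represents_subst hs0 hdet (mordellForm_eval_one_zero x y) (mordellForm_hessian_one_zero x y),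
    ⟨S.subst hdet⟩⟩

/-! ### Points attached to one form -/

lemma cubes_eq_or_eq {k x y : ℤ} {s U V : ℂ} (hs : s ^ 2 = k) (hxy : y ^ 2 = x ^ 3 + k)
    (hcubes : U ^ 3 - V ^ 3 = 2 * s) (hmul : U * V = x) :
    (U ^ 3 = y + s ∧ V ^ 3 = y - s) ∨ (U ^ 3 = -y + s ∧ V ^ 3 = -y - s) := by
  have hxyC : (y : ℂ) ^ 2 = x ^ 3 + k := by exact_mod_cast hxy
  have hsq : (U ^ 3 + V ^ 3) ^ 2 = (2 * y : ℂ) ^ 2 := by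
    calc (U ^ 3 + V ^ 3) ^ 2 = (U ^ 3 - V ^ 3) ^ 2 + 4 * (U * V) ^ 3 := by ring
      _ = (2 * y : ℂ) ^ 2 := by
        rw [hcubes, hmul]
        linear_combination 4 * hs - 4 * hxyC
  rcases sq_eq_sq_iff_eq_or_eq_neg.1 hsq with hsum | hsum
  · exact .inl ⟨by linear_combination (hsum + hcubes) / 2,
      by linear_combination (hsum - hcubes) / 2⟩
  · exact .inr ⟨by linear_combination (hsum + hcubes) / 2,
      by linear_combination (hsum - hcubes) / 2⟩

lemma exists_cube_root_of_unity_minimizing (U V : ℂ) :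
    ∃ w : ℂ, w ^ 3 = 1 ∧ ∀ z : ℂ, z ^ 3 = 1 → ‖U - w * V‖ ≤ ‖U - z * V‖ := by
  have hmem (z : ℂ) : z ∈ Polynomial.nthRootsFinset 3 1 ↔ z ^ 3 = 1 :=
    Polynomial.mem_nthRootsFinset three_pos 1
  obtain ⟨w, hw, hmin⟩ := (Polynomial.nthRootsFinset 3 (1 : ℂ)).exists_min_image
    (fun z => ‖U - z * V‖) ⟨1, (hmem 1).2 (one_pow 3)⟩
  exact ⟨w, (hmem w).1 hw, fun z hz => hmin z ((hmem z).2 hz)⟩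

lemma exists_isLargePoint {k x y : ℤ} {s U V : ℂ} (hk : 10 ^ 12 ≤ |k|) (hs : s ^ 2 = k)
    (hkx : |k| ≤ 8 * x) (hxy : y ^ 2 = x ^ 3 + k) (hcubes : U ^ 3 - V ^ 3 = 2 * s)
    (hmul : U * V = x) :
    ∃ w : ℂ, w ^ 3 = 1 ∧ ∃ y' : ℤ, IsLargePoint k s x y' (w * U) (w ^ 2 * V) := by
  obtain ⟨w, hw, hmin⟩ := exists_cube_root_of_unity_minimizing U V
  have hw6 : (w ^ 2) ^ 3 = 1 := by rw [pow_right_comm, hw, one_pow]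
  have hmul' : w * U * (w ^ 2 * V) = x := by linear_combination U * V * hw + hmul
  have hmin' (z : ℂ) (hz : z ^ 3 = 1) : ‖w * U - w ^ 2 * V‖ ≤ ‖w * U - z * (w ^ 2 * V)‖ := by
    have hnorm : ‖w‖ = 1 := Complex.norm_eq_one_of_pow_eq_one hw three_ne_zero
    calc ‖w * U - w ^ 2 * V‖ = ‖w * (U - w * V)‖ := by ring_nf
      _ ≤ ‖w * (U - z * w * V)‖ := by
        rw [norm_mul, norm_mul, hnorm, one_mul, one_mul]
        exact hmin _ (by rw [mul_pow, hz, hw, one_mul])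
      _ = ‖w * U - z * (w ^ 2 * V)‖ := by ring_nf
  refine ⟨w, hw, ?_⟩
  rcases cubes_eq_or_eq hs hxy hcubes hmul with ⟨hU, hV⟩ | ⟨hU, hV⟩
  · exact ⟨y, hs, hk, hkx, by rw [mul_pow, hw, hU, one_mul], by rw [mul_pow, hw6, hV, one_mul],
      hmul', hmin'⟩
  · refine ⟨-y, hs, hk, hkx, ?_, ?_, hmul', hmin'⟩
    · rw [mul_pow, hw, hU, one_mul, Int.cast_neg]
    · rw [mul_pow, hw6, hV, one_mul, Int.cast_neg]

namespace CubeSplitting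

variable {f : BinaryCubic} {s : ℂ} (S : CubeSplitting f s) {k : ℤ}

lemma card_le_eight (hk : 10 ^ 12 ≤ |k|) (hs : s ≠ 0) {w : ℂ} (hw : w ^ 3 = 1) {X : Finset ℤ}
    (hX : ∀ x ∈ X, ∃ p q y : ℤ, f.eval p q = 1 ∧
      IsLargePoint k s x y (w * S.left p q) (w ^ 2 * S.right p q)) : #X ≤ 8 := by
  have hcross (U V : ℂ) : w * U * (w ^ 2 * V) = U * V := by linear_combination U * V * hw
  refine card_le_eight_of_gaps hk ?_ ?_ ?_
  · intro x hx
    obtain ⟨p, q, y, -, h⟩ := hX x hx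
    exact h.abs_le
  · intro x₁ hx₁ x₂ hx₂ hlt
    obtain ⟨p₁, q₁, y₁, heval₁, h₁⟩ := hX x₁ hx₁
    obtain ⟨p₂, q₂, y₂, heval₂, h₂⟩ := hX x₂ hx₂
    have hm : p₁ * q₂ - p₂ * q₁ ≠ 0 := by
      intro hm
      obtain ⟨rfl, rfl⟩ := BinaryCubic.eq_of_eval_eq_one_of_parallel heval₁ heval₂
        (sub_eq_zero.1 hm)
      exact hlt.ne (by exact_mod_cast h₁.mul_eq.symm.trans h₂.mul_eq)
    exact sq_le_of_isLargePoint h₁ h₂ hlt.le hm (by rw [hcross, hcross, S.left_mul_right_sub])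
  · intro x₁ hx₁ x₂ hx₂ _ hbig
    obtain ⟨p₁, q₁, y₁, -, h₁⟩ := hX x₁ hx₁
    obtain ⟨p₂, q₂, y₂, -, h₂⟩ := hX x₂ hx₂
    exact lt_pow_seven_of_isLargePoint h₁ h₂ (by rw [hcross, hcross, S.left_mul_right_sub])
      (by rw [hcross, hcross, S.left_mul_right_add hs]) hbig

include S in
lemma card_le_of_represents (hk : 10 ^ 12 ≤ |k|) (hs : s ^ 2 = k) {X : Finset ℤ}
    (hX : ∀ x ∈ X, f.Represents x ∧ |k| ≤ 8 * x ∧ ∃ y, y ^ 2 = x ^ 3 + k) : #X ≤ 24 := by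
  classical
  have hs0 : s ≠ 0 := ne_zero_of_sq_eq_intCast (abs_pos.1 (by omega)) hs
  have hlarge : ∀ x ∈ X, ∃ w : ℂ, w ^ 3 = 1 ∧ ∃ p q y : ℤ, f.eval p q = 1 ∧
      IsLargePoint k s x y (w * S.left p q) (w ^ 2 * S.right p q) := by
    intro x hx
    obtain ⟨⟨p, q, heval, rfl⟩, hkx, y, hxy⟩ := hX x hx
    obtain ⟨w, hw, y', hlarge⟩ := exists_isLargePoint hk hs hkx hxy
      (by rw [S.left_pow_sub_right_pow, heval, Int.cast_one, mul_one]) (S.left_mul_right hs0 p q)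
    exact ⟨w, hw, p, q, y', heval, hlarge⟩
  choose! w hw hpoint using hlarge
  have himage : #(X.image w) ≤ 3 := by
    refine (card_le_card ?_).trans ((Multiset.toFinset_card_le _).trans
      (Polynomial.card_nthRoots 3 (1 : ℂ)))
    intro z hz
    obtain ⟨x, hx, rfl⟩ := mem_image.1 hz
    exact Multiset.mem_toFinset.2 ((Polynomial.mem_nthRoots three_pos).2 (hw x hx))
  have hfibres := card_le_mul_card_image (f := w) X 8 fun z hz => by
    obtain ⟨x, hx, rfl⟩ := mem_image.1 hz
    refine S.card_le_eight hk hs0 (hw x hx) fun x' hx' => ?_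
    rw [mem_filter] at hx'
    simpa only [hx'.2] using hpoint x' hx'.1
  omega

end CubeSplitting

/-! ### Counting -/

section Counting

lemma card_le_two_of_sq_eq {α : Type*} {G : Finset α} {g : α → ℤ} {n : ℤ}
    (hg : ∀ P ∈ G, g P ^ 2 = n) (hinj : Set.InjOn g G) : #G ≤ 2 := by
  obtain rfl | ⟨P, hP⟩ := G.eq_empty_or_nonempty
  · simp
  rw [← card_image_of_injOn hinj]
  refine (card_le_card fun z hz => ?_).trans (card_le_two (a := g P) (b := -g P))
  obtain ⟨Q, hQ, rfl⟩ := mem_image.1 hz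
  simpa using sq_eq_sq_iff_eq_or_eq_neg.1 ((hg Q hQ).trans (hg P hP).symm)

lemma card_le_two_mul_card_image_fst {k : ℤ} {F : Finset (ℤ × ℤ)}
    (hF : ∀ P ∈ F, P.2 ^ 2 = P.1 ^ 3 + k) : #F ≤ 2 * #(F.image Prod.fst) := by
  refine card_le_mul_card_image F 2 fun x _ =>
    card_le_two_of_sq_eq (g := Prod.snd) (n := x ^ 3 + k) ?_ ?_
  · intro P hP
    rw [mem_filter] at hP
    rw [← hP.2, hF P hP.1]
  · intro P hP Q hQ heq
    rw [mem_coe, mem_filter] at hP hQ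
    exact Prod.ext (hP.2.trans hQ.2.symm) heq

lemma card_le_two_of_discr_eq {k a b c : ℤ} (hk : k ≠ 0) {Φ : Finset BinaryCubic}
    (hΦ : ∀ f ∈ Φ, f.discr = 4 * k ∧ f.a = a ∧ f.b = b ∧ f.c = c) : #Φ ≤ 2 := by
  have hdiscr : ∀ f ∈ Φ,
      (b * c - a * f.d) ^ 2 - 4 * (b ^ 2 - a * c) * (c ^ 2 - b * f.d) = 4 * k := by
    intro f hf
    obtain ⟨hdiscr, rfl, rfl, rfl⟩ := hΦ f hf
    exact hdiscr
  have hext : ∀ f ∈ Φ, ∀ g ∈ Φ, f.d = g.d → f = g := by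
    intro f hf g hg hd
    obtain ⟨-, hfa, hfb, hfc⟩ := hΦ f hf
    obtain ⟨-, hga, hgb, hgc⟩ := hΦ g hg
    exact BinaryCubic.ext (hfa.trans hga.symm) (hfb.trans hgb.symm) (hfc.trans hgc.symm) hd
  rcases eq_or_ne a 0 with rfl | ha
  · refine (card_le_one.2 fun f hf g hg => hext f hf g hg ?_).trans one_le_two
    have hb : b ≠ 0 := by
      rintro rfl
      exact hk (by linarith [hdiscr f hf])
    refine mul_left_cancel₀ (by positivity : 4 * b ^ 3 ≠ 0) ?_
    linear_combination hdiscr f hf - hdiscr g hg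
  · refine card_le_two_of_sq_eq (g := fun f => a ^ 2 * f.d - 3 * a * b * c + 2 * b ^ 3)
      (n := 4 * a ^ 2 * k + 4 * (b ^ 2 - a * c) ^ 3) ?_ ?_
    · intro f hf
      linear_combination a ^ 2 * hdiscr f hf
    · intro f hf g hg heq
      refine hext f hf g hg (mul_left_cancel₀ (pow_ne_zero 2 ha) ?_)
      linear_combination heq

/-- A box containing the first three coefficients of the reduced forms with `|k| ≤ N ^ 12`. -/
noncomputable def coeffBox (N : ℕ) : Finset (ℤ × ℤ × ℤ) :=
  Icc (-(2 * N ^ 3 : ℤ)) (2 * N ^ 3) ×ˢ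
      Icc (-(2 * N ^ 3 : ℤ)) (2 * N ^ 3) ×ˢ Icc (-(3 * N ^ 4 : ℤ)) (3 * N ^ 4) ∪
    {0} ×ˢ Icc (-(2 * N ^ 3 : ℤ)) (2 * N ^ 3) ×ˢ Icc (-(4 * N ^ 6 : ℤ)) (4 * N ^ 6)

variable {k : ℤ} {N : ℕ}

lemma mem_Icc_of_abs_pow_le {z B : ℤ} {n : ℕ} (hn : n ≠ 0) (hB : 0 ≤ B) (h : |z| ^ n ≤ B ^ n) :
    z ∈ Icc (-B) B :=
  mem_Icc.2 (abs_le.1 (le_of_pow_le_pow_left₀ hn hB h))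

lemma coeffs_mem_coeffBox (hN : |k| ≤ N ^ 12) {f : BinaryCubic} (hf : f.IsReduced k) :
    (f.a, f.b, f.c) ∈ coeffBox N := by
  have hN0 : (0 : ℤ) ≤ (N : ℤ) ^ 12 := by positivity
  have hfour {z : ℤ} (hz : z ^ 4 ≤ 10 * |k|) : z ∈ Icc (-(2 * N ^ 3 : ℤ)) (2 * N ^ 3) :=
    mem_Icc_of_abs_pow_le four_ne_zero (by positivity) <| by
      rw [Even.pow_abs (by decide)]
      linarith [show (2 * (N : ℤ) ^ 3) ^ 4 = 16 * (N : ℤ) ^ 12 by ring]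
  simp only [coeffBox, mem_union, mem_product, mem_singleton]
  rcases eq_or_ne f.a 0 with ha | ha
  · refine .inr ⟨ha, hfour hf.b_pow_le, mem_Icc_of_abs_pow_le two_ne_zero (by positivity) ?_⟩
    rw [sq_abs]
    linarith [hf.c_sq_le ha, show (4 * (N : ℤ) ^ 6) ^ 2 = 16 * (N : ℤ) ^ 12 by ring]
  · refine .inl ⟨hfour hf.a_pow_le, hfour hf.b_pow_le,
      mem_Icc_of_abs_pow_le three_ne_zero (by positivity) ?_⟩
    linarith [hf.c_pow_le ha, show (3 * (N : ℤ) ^ 4) ^ 3 = 27 * (N : ℤ) ^ 12 by ring]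

lemma card_Icc_neg_self (n : ℕ) : #(Icc (-(n : ℤ)) n) = 2 * n + 1 := by
  rw [Int.card_Icc]
  omega

lemma card_coeffBox_le (hN : 1 ≤ N) : #(coeffBox N) ≤ 220 * N ^ 10 := by
  have h₃ := card_Icc_neg_self (2 * N ^ 3)
  have h₄ := card_Icc_neg_self (3 * N ^ 4)
  have h₆ := card_Icc_neg_self (4 * N ^ 6)
  push_cast at h₃ h₄ h₆
  refine (card_union_le _ _).trans ?_
  simp only [card_product, card_singleton]
  rw [h₃, h₄, h₆]
  have hN3 : 1 ≤ N ^ 3 := Nat.one_le_pow _ _ hN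
  have hN4 : 1 ≤ N ^ 4 := Nat.one_le_pow _ _ hN
  have hN6 : 1 ≤ N ^ 6 := Nat.one_le_pow _ _ hN
  calc _ ≤ (5 * N ^ 3) * ((5 * N ^ 3) * (7 * N ^ 4)) + 1 * ((5 * N ^ 3) * (9 * N ^ 6)) := by
        gcongr <;> omega
    _ = 175 * N ^ 10 + 45 * N ^ 9 := by ring
    _ ≤ 175 * N ^ 10 + 45 * N ^ 10 := by gcongr; omega
    _ = 220 * N ^ 10 := by ring

lemma card_le_of_isReduced (hk : k ≠ 0) (hN : |k| ≤ N ^ 12) {Φ : Finset BinaryCubic}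
    (hΦ : ∀ f ∈ Φ, f.IsReduced k) : #Φ ≤ 440 * N ^ 10 := by
  have hN1 : 1 ≤ N := by
    rw [Nat.one_le_iff_ne_zero]
    rintro rfl
    exact hk (by simpa using hN)
  have hfibres := card_le_mul_card_image (f := fun f : BinaryCubic => (f.a, f.b, f.c)) Φ 2 <| by
    rintro ⟨a, b, c⟩ -
    refine card_le_two_of_discr_eq (a := a) (b := b) (c := c) hk fun f hf => ?_
    rw [mem_filter, Prod.mk.injEq, Prod.mk.injEq] at hf
    exact ⟨(hΦ f hf.1).discr_eq, hf.2⟩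
  have hbox := card_le_card (image_subset_iff.2 fun f hf => coeffs_mem_coeffBox hN (hΦ f hf))
  have := card_coeffBox_le hN1
  omega

lemma card_large_abscissae_le (hk : 10 ^ 12 ≤ |k|) (hN : |k| ≤ N ^ 12) {X : Finset ℤ}
    (hX : ∀ x ∈ X, |k| ≤ 8 * x ∧ ∃ y, y ^ 2 = x ^ 3 + k) : #X ≤ 10560 * N ^ 10 := by
  classical
  have hk0 : k ≠ 0 := abs_pos.1 (by omega)
  have : Nonempty BinaryCubic := ⟨mordellForm 0 0⟩
  obtain ⟨s, hs⟩ := IsAlgClosed.exists_pow_nat_eq (k : ℂ) two_pos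
  have hform : ∀ x ∈ X, ∃ f : BinaryCubic,
      f.IsReduced k ∧ f.Represents x ∧ Nonempty (CubeSplitting f s) := by
    intro x hx
    obtain ⟨hkx, y, hxy⟩ := hX x hx
    exact exists_isReduced_represents hk0 hs (by omega) hxy
  choose! f hreduced hrepr hsplit using hform
  have hfibres := card_le_mul_card_image (f := f) X 24 fun g hg => by
    obtain ⟨x, hx, rfl⟩ := mem_image.1 hg
    obtain ⟨S⟩ := hsplit x hx
    refine S.card_le_of_represents hk hs fun x' hx' => ?_
    rw [mem_filter] at hx'
    exact ⟨hx'.2 ▸ hrepr x' hx'.1, hX x' hx'.1⟩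
  have hforms : #(X.image f) ≤ 440 * N ^ 10 := card_le_of_isReduced hk0 hN fun g hg => by
    obtain ⟨x, hx, rfl⟩ := mem_image.1 hg
    exact hreduced x hx
  omega

lemma card_small_abscissae_le (hk : 10 ^ 12 ≤ |k|) {X : Finset ℤ}
    (hX : ∀ x ∈ X, 8 * x < |k| ∧ ∃ y, y ^ 2 = x ^ 3 + k) : (#X : ℤ) ≤ |k| / 4 + 1 := by
  have hsubset : X ⊆ Icc (-(|k| / 8)) (|k| / 8) := by
    intro x hx
    obtain ⟨hlt, y, hxy⟩ := hX x hx
    refine mem_Icc.2 ⟨?_, by omega⟩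
    by_contra! hneg
    have hcube : -|k| ≤ x ^ 3 := by linarith [sq_nonneg y, le_abs_self k]
    have hlarge : 100 ≤ -x := by omega
    have hlow : |k| < 8 * -x := by omega
    nlinarith [mul_le_mul hlarge hlarge (by norm_num) (by linarith)]
  have hcard := card_le_card hsubset
  rw [Int.card_Icc] at hcard
  omega

lemma two_mul_card_abscissae_lt (hk : 10 ^ 60 ≤ |k|) {X : Finset ℤ}
    (hX : ∀ x ∈ X, ∃ y, y ^ 2 = x ^ 3 + k) : 2 * (#X : ℤ) < |k| := by
  have hk12 : 10 ^ 12 ≤ |k| := le_trans (by norm_num) hk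
  set M := Nat.nthRoot 12 k.natAbs
  have hlow : M ^ 12 ≤ k.natAbs := Nat.pow_nthRoot_le (.inl (by decide))
  have hhigh : k.natAbs < (M + 1) ^ 12 := Nat.lt_pow_nthRoot_add_one (by decide) _
  zify at hlow hhigh
  have hM : 10 ^ 4 ≤ M := by
    by_contra! hlt
    have hpow : (M + 1) ^ 12 ≤ (10 ^ 4) ^ 12 := by gcongr; omega
    zify at hpow
    omega
  have hlarge := card_large_abscissae_le (N := M + 1) hk12 (by exact_mod_cast hhigh.le)
    (X := X.filter fun x => |k| ≤ 8 * x) fun x hx => by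
      rw [mem_filter] at hx
      exact ⟨hx.2, hX x hx.1⟩
  have hsmall := card_small_abscissae_le hk12 (X := X.filter fun x => ¬ |k| ≤ 8 * x) fun x hx => by
    rw [mem_filter, not_le] at hx
    exact ⟨hx.2, hX x hx.1⟩
  have hsplit := card_filter_add_card_filter_not (s := X) fun x => |k| ≤ 8 * x
  have hdominated : 8 * (10560 * (M + 1) ^ 10) ≤ M ^ 12 := by
    calc 8 * (10560 * (M + 1) ^ 10) ≤ 8 * (10560 * (2 * M) ^ 10) := by gcongr; omega
      _ = 86507520 * M ^ 10 := by ring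
      _ ≤ (10 ^ 4 * 10 ^ 4) * M ^ 10 := by gcongr; norm_num
      _ ≤ (M * M) * M ^ 10 := by gcongr
      _ = M ^ 12 := by ring
  zify at hlarge hdominated
  omega

end Counting

end MordellEquation

/-- The set of nonzero integers `k` for which the Mordell equation `y² = x³ + k`
has exactly `|k|` integral solutions is finite. -/
theorem stmt_0 :
    {k : ℤ | k ≠ 0 ∧
      Set.ncard {p : ℤ × ℤ | p.2 ^ 2 = p.1 ^ 3 + k} = k.natAbs}.Finite := by
  refine (Set.finite_Icc (-(10 ^ 60 : ℤ)) (10 ^ 60)).subset ?_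
  rintro k ⟨hk0, hcard⟩
  rw [Set.mem_Icc, ← abs_le]
  by_contra! hk
  have hfin : {p : ℤ × ℤ | p.2 ^ 2 = p.1 ^ 3 + k}.Finite := by
    refine Set.finite_of_ncard_ne_zero ?_
    rwa [hcard, Int.natAbs_ne_zero]
  rw [Set.ncard_eq_toFinset_card _ hfin] at hcard
  have hpoints := MordellEquation.card_le_two_mul_card_image_fst (k := k) (F := hfin.toFinset)
    (by simp)
  have habscissae := MordellEquation.two_mul_card_abscissae_lt
      (X := hfin.toFinset.image Prod.fst) hk.le <| by
    simp only [Finset.mem_image, Set.Finite.mem_toFinset]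
    rintro _ ⟨⟨x, y⟩, hxy, rfl⟩
    exact ⟨y, hxy⟩
  rw [Int.abs_eq_natAbs] at habscissae
  omega
end

section
/- Let a, b, c, d, x₀, y₀, k be integers such that the binary cubic form F(x, y) = a·x³ + 3b·x²y + 3c·xy² + d·y³ has discriminant D = -27(a²d² - 6abcd - 3b²c² + 4ac³ + 4b³d) equal to -108k, and suppose F(x₀, y₀) = 1. Set H₁(x, y) = (b² - ac)x² + (bc - ad)xy + (c² - bd)y² and G₁(x, y) = a₁x³ + 3b₁x²y + 3c₁xy² + d₁y³, where a₁ = -a²d + 3abc - 2b³, b₁ = -b²c - abd + 2ac², c₁ = bc² - 2b²d + acd, d₁ = -3bcd + 2c³ + ad². Then G₁(x₀, y₀) is even, and the integers X = H₁(x₀, y₀) and Y = G₁(x₀, y₀)/2 satisfy Y² = X³ + k. -/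
/-!
The covariants of a binary cubic form `F` satisfy the classical syzygy `G₁² = 4 H₁³ + Δ F²`, where
the discriminant of `F` is `-27 Δ`. If `Δ = 4 k`, then `G₁²` is four times an integer, so `G₁` is
even, and dividing the syzygy by `4` gives `(G₁ / 2)² = H₁³ + k F²`. A point where `F = 1`
therefore produces a solution of `Y² = X³ + k`.
-/

theorem dvd_and_ediv_pow_eq_of_pow_eq_pow_mul {m g h : ℤ} {n : ℕ} (hm : m ≠ 0) (hn : n ≠ 0)
    (hg : g ^ n = m ^ n * h) : m ∣ g ∧ (g / m) ^ n = h := by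
  have hdvd : m ∣ g := (Int.pow_dvd_pow_iff hn).mp ⟨h, hg⟩
  refine ⟨hdvd, mul_left_cancel₀ (pow_ne_zero n hm) ?_⟩
  rw [← mul_pow, Int.mul_ediv_cancel' hdvd, hg]

/-- The binary cubic form `a x³ + 3 b x² y + 3 c x y² + d y³`. The fields are the coefficients
with the binomial factors `1, 3, 3, 1` removed. -/
structure HessianCubic (R : Type*) where
  (a b c d : R)

namespace HessianCubic

variable {R : Type*} [CommRing R] (f : HessianCubic R) (x y : R)

/-- The value `F(x, y)` of the form. -/
def eval : R :=
  f.a * x ^ 3 + 3 * f.b * x ^ 2 * y + 3 * f.c * x * y ^ 2 + f.d * y ^ 3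

/-- The invariant `Δ` for which the discriminant of the form is `-27 Δ`. -/
def reducedDiscr : R :=
  f.a ^ 2 * f.d ^ 2 - 6 * f.a * f.b * f.c * f.d - 3 * f.b ^ 2 * f.c ^ 2
    + 4 * f.a * f.c ^ 3 + 4 * f.b ^ 3 * f.d

/-- The quadratic covariant `H₁ = H / 9` at `(x, y)`, where `H = -(F_xx F_yy - F_xy²) / 4`. It is
given by its coefficients, so that it makes sense over every commutative ring. -/
def hessian : R :=
  (f.b ^ 2 - f.a * f.c) * x ^ 2 + (f.b * f.c - f.a * f.d) * x * y
    + (f.c ^ 2 - f.b * f.d) * y ^ 2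

/-- The cubic covariant `G₁ = G / 27` at `(x, y)`, where `G = F_x H_y - F_y H_x` is the Jacobian
determinant of `F` and `H = 9 H₁`. Like `hessian`, it is given by its coefficients. -/
def jacobian : R :=
  (-(f.a ^ 2) * f.d + 3 * f.a * f.b * f.c - 2 * f.b ^ 3) * x ^ 3
    + 3 * (-(f.b ^ 2) * f.c - f.a * f.b * f.d + 2 * f.a * f.c ^ 2) * x ^ 2 * y
    + 3 * (f.b * f.c ^ 2 - 2 * f.b ^ 2 * f.d + f.a * f.c * f.d) * x * y ^ 2
    + (-3 * f.b * f.c * f.d + 2 * f.c ^ 3 + f.a * f.d ^ 2) * y ^ 3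

theorem jacobian_sq :
    f.jacobian x y ^ 2 = 4 * f.hessian x y ^ 3 + f.reducedDiscr * f.eval x y ^ 2 := by
  unfold jacobian hessian reducedDiscr eval
  ring

end HessianCubic

theorem stmt_4_general (f : HessianCubic ℤ) (x y k : ℤ) (hΔ : f.reducedDiscr = 4 * k) :
    2 ∣ f.jacobian x y ∧
      (f.jacobian x y / 2) ^ 2 = f.hessian x y ^ 3 + k * f.eval x y ^ 2 := by
  refine dvd_and_ediv_pow_eq_of_pow_eq_pow_mul two_ne_zero two_ne_zero ?_
  rw [f.jacobian_sq, hΔ]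
  ring

/-- If `F(x,y) = a·x³ + 3b·x²y + 3c·xy² + d·y³` has discriminant
`D = -27(a²d² - 6abcd - 3b²c² + 4ac³ + 4b³d) = -108k` and `F(x₀,y₀) = 1`, then with
`H₁, G₁` the (scaled) Hessian and Jacobian covariants, `G₁(x₀,y₀)` is even and
`X = H₁(x₀,y₀)`, `Y = G₁(x₀,y₀)/2` satisfy `Y² = X³ + k`. -/
theorem stmt_4 (a b c d x₀ y₀ k : ℤ)
    (hD : -27 * (a ^ 2 * d ^ 2 - 6 * a * b * c * d - 3 * b ^ 2 * c ^ 2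
        + 4 * a * c ^ 3 + 4 * b ^ 3 * d) = -108 * k)
    (hF : a * x₀ ^ 3 + 3 * b * x₀ ^ 2 * y₀ + 3 * c * x₀ * y₀ ^ 2 + d * y₀ ^ 3 = 1) :
    2 ∣ ((-(a ^ 2) * d + 3 * a * b * c - 2 * b ^ 3) * x₀ ^ 3
        + 3 * (-(b ^ 2) * c - a * b * d + 2 * a * c ^ 2) * x₀ ^ 2 * y₀
        + 3 * (b * c ^ 2 - 2 * b ^ 2 * d + a * c * d) * x₀ * y₀ ^ 2
        + (-3 * b * c * d + 2 * c ^ 3 + a * d ^ 2) * y₀ ^ 3) ∧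
    (((-(a ^ 2) * d + 3 * a * b * c - 2 * b ^ 3) * x₀ ^ 3
        + 3 * (-(b ^ 2) * c - a * b * d + 2 * a * c ^ 2) * x₀ ^ 2 * y₀
        + 3 * (b * c ^ 2 - 2 * b ^ 2 * d + a * c * d) * x₀ * y₀ ^ 2
        + (-3 * b * c * d + 2 * c ^ 3 + a * d ^ 2) * y₀ ^ 3) / 2) ^ 2 =
      ((b ^ 2 - a * c) * x₀ ^ 2 + (b * c - a * d) * x₀ * y₀
        + (c ^ 2 - b * d) * y₀ ^ 2) ^ 3 + k := by
  let f : HessianCubic ℤ := ⟨a, b, c, d⟩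
  have hΔ : f.reducedDiscr = 4 * k := by
    simp only [HessianCubic.reducedDiscr, f]
    linarith
  have hf : f.eval x₀ y₀ = 1 := hF
  have hcurve := stmt_4_general f x₀ y₀ k hΔ
  rw [hf, one_pow, mul_one] at hcurve
  exact hcurve
end

section
/- For every positive integer n, n²/ζ(2) < ψ(n)·φ(n); equivalently, 6n²/π² < φ(n) · n·∏_{p prime, p ∣ n} (1 + 1/p), where φ is Euler's totient function. -/
open Real

/-!
Since `φ(n) = n ∏ (1 - 1/p)` over the primes `p ∣ n`, we have `ψ(n) φ(n) = n² ∏ (1 - 1/p²)`.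
The inverse of this finite product is the sum of `1/m²` over those `m` all of whose prime factors
divide `n`. That is a proper part of the series `ζ(2)`, because it misses `1/q²` for every
prime `q ∤ n`.
-/

section EulerProduct

variable {f : ℕ →* ℝ} {s : Finset ℕ} {m : ℕ}

theorem prod_primes_inv_one_sub_lt_tsum (hf : Summable f) (hf₀ : ∀ k, 0 ≤ f k)
    (hm : m ∉ Nat.factoredNumbers s) (hfm : 0 < f m) :
    ∏ p ∈ s with p.Prime, (1 - f p)⁻¹ < ∑' k, f k := by
  have hsum_factored : HasSum ((Nat.factoredNumbers s).indicator f)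
      (∏ p ∈ s with p.Prime, (1 - f p)⁻¹) :=
    hasSum_subtype_iff_indicator.mp
      (EulerProduct.summable_and_hasSum_factoredNumbers_prod_filter_prime_geometric
        (fun hp ↦ hf.norm_lt_one hp.one_lt) s).2
  refine hasSum_lt (i := m) (Set.indicator_le_self' fun k _ ↦ hf₀ k) ?_ hsum_factored hf.hasSum
  rwa [Set.indicator_of_notMem hm]

theorem inv_tsum_lt_prod_primes_one_sub (hf : Summable f) (hf₀ : ∀ k, 0 ≤ f k)
    (hm : m ∉ Nat.factoredNumbers s) (hfm : 0 < f m) :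
    (∑' k, f k)⁻¹ < ∏ p ∈ s with p.Prime, (1 - f p) := by
  have hprod_pos : 0 < ∏ p ∈ s with p.Prime, (1 - f p) := Finset.prod_pos fun p hp ↦
    sub_pos.mpr <| (le_abs_self _).trans_lt <|
      hf.norm_lt_one (Finset.mem_filter.mp hp).2.one_lt
  apply inv_lt_of_inv_lt₀ hprod_pos
  rw [← Finset.prod_inv_distrib]
  exact prod_primes_inv_one_sub_lt_tsum hf hf₀ hm hfm

end EulerProduct

/-- The completely multiplicative function `m ↦ m⁻ˢ`, whose sum is `ζ(s)` for real `s > 1`. -/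
noncomputable def invRpowHom (s : ℝ) : ℕ →* ℝ where
  toFun m := ((m : ℝ) ^ s)⁻¹
  map_one' := by simp
  map_mul' a b := by
    rw [Nat.cast_mul, mul_rpow a.cast_nonneg b.cast_nonneg, mul_inv]

theorem exists_prime_notMem_factoredNumbers (s : Finset ℕ) :
    ∃ q : ℕ, q.Prime ∧ q ∉ Nat.factoredNumbers s := by
  obtain ⟨q, hq, hqs⟩ := Nat.infinite_setOfPred_prime.exists_notMem_finset s
  exact ⟨q, hq, fun h ↦ hqs (Nat.mem_factoredNumbers'.mp h q hq dvd_rfl)⟩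

theorem inv_tsum_inv_rpow_lt_prod_primes {s : ℝ} (hs : 1 < s) (t : Finset ℕ) :
    (∑' m : ℕ, ((m : ℝ) ^ s)⁻¹)⁻¹ < ∏ p ∈ t with p.Prime, (1 - ((p : ℝ) ^ s)⁻¹) := by
  obtain ⟨q, hq, hqt⟩ := exists_prime_notMem_factoredNumbers t
  have hq_pos : (0 : ℝ) < q := mod_cast hq.pos
  exact inv_tsum_lt_prod_primes_one_sub (f := invRpowHom s) (summable_nat_rpow_inv.mpr hs)
    (fun k ↦ inv_nonneg.mpr (rpow_nonneg k.cast_nonneg s)) hqt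
    (inv_pos.mpr (rpow_pos_of_pos hq_pos s))

theorem inv_pi_sq_div_six_lt_prod_primes (t : Finset ℕ) :
    (π ^ 2 / 6)⁻¹ < ∏ p ∈ t with p.Prime, (1 - ((p : ℝ) ^ 2)⁻¹) := by
  simpa only [rpow_two, ← one_div ((_ : ℝ) ^ 2), hasSum_zeta_two.tsum_eq] using
    inv_tsum_inv_rpow_lt_prod_primes one_lt_two t

theorem cast_totient_eq_mul_prod_primeFactors (K : Type*) [Field K] [CharZero K] (n : ℕ) :
    (n.totient : K) = n * ∏ p ∈ n.primeFactors, (1 - (p : K)⁻¹) := by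
  simpa using congrArg (Rat.cast : ℚ → K) (Nat.totient_eq_mul_prod_factors n)

/-- The Dedekind psi function `ψ(n) = n ∏_{p ∣ n} (1 + 1/p)`, as a real number. -/
noncomputable def dedekindPsi (n : ℕ) : ℝ :=
  n * ∏ p ∈ n.primeFactors, (1 + 1 / (p : ℝ))

theorem dedekindPsi_mul_totient (n : ℕ) :
    dedekindPsi n * n.totient = (n : ℝ) ^ 2 * ∏ p ∈ n.primeFactors, (1 - ((p : ℝ) ^ 2)⁻¹) := by
  rw [dedekindPsi, cast_totient_eq_mul_prod_primeFactors, mul_mul_mul_comm, ← sq,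
    ← Finset.prod_mul_distrib]
  congr! 2 with p
  ring

/-- For every positive integer `n`, `n²/ζ(2) < ψ(n)·φ(n)`, i.e.
`6n²/π² < φ(n) · n·∏_{p ∣ n prime} (1 + 1/p)`, where `ψ` is the Dedekind psi
function and `φ` is Euler's totient function. -/
theorem stmt_8 (n : ℕ) (hn : 0 < n) :
    (n : ℝ) ^ 2 / (π ^ 2 / 6) <
      ((n : ℝ) * ∏ p ∈ n.primeFactors, (1 + 1 / (p : ℝ))) * n.totient := by
  have hprimes : n.primeFactors.filter Nat.Prime = n.primeFactors :=
    Finset.filter_true_of_mem fun _ ↦ Nat.prime_of_mem_primeFactors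
  calc (n : ℝ) ^ 2 / (π ^ 2 / 6) = (n : ℝ) ^ 2 * (π ^ 2 / 6)⁻¹ := div_eq_mul_inv _ _
    _ < (n : ℝ) ^ 2 * ∏ p ∈ n.primeFactors, (1 - ((p : ℝ) ^ 2)⁻¹) := by
      gcongr
      simpa only [hprimes] using inv_pi_sq_div_six_lt_prod_primes n.primeFactors
    _ = dedekindPsi n * n.totient := (dedekindPsi_mul_totient n).symm
end

section
/- Let a < b < c be real numbers. Then ∫_a^b dx/√((x - a)(b - x)(c - x)) = 2·∫_0^{π/2} dθ/√((c - b)·sin²θ + (c - a)·cos²θ). -/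
open Real

/-!
The substitution `x = a + (b - a) sin² θ` maps `(0, π/2)` onto `(a, b)` and satisfies
`(x - a)(b - x) = ((b - a) sin θ cos θ)²`, which is the square of half of `dx/dθ`. It therefore
turns the weight `dx / √((x - a)(b - x))` into `2 dθ`, whatever function is integrated against it.
For `1 / √(c - x)` one concludes with `c - x = (c - b) sin² θ + (c - a) cos² θ`.
-/

section SinSqSubstitution

variable {E : Type*} [NormedAddCommGroup E] [NormedSpace ℝ E]

lemma hasDerivAt_add_mul_sin_sq (a d θ : ℝ) :
    HasDerivAt (fun t => a + d * sin t ^ 2) (2 * (d * (sin θ * cos θ))) θ := by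
  refine ((((hasDerivAt_sin θ).pow 2).const_mul d).const_add a).congr_deriv ?_
  push_cast
  ring

lemma sin_mul_cos_pos_of_mem_Ioo {θ : ℝ} (hθ : θ ∈ Set.Ioo 0 (π / 2)) : 0 < sin θ * cos θ :=
  mul_pos (sin_pos_of_pos_of_lt_pi hθ.1 (by linarith [hθ.2, pi_pos]))
    (cos_pos_of_mem_Ioo ⟨by linarith [hθ.1, pi_pos], hθ.2⟩)

lemma add_mul_sin_sq_sub_mul_sub (a b θ : ℝ) :
    (a + (b - a) * sin θ ^ 2 - a) * (b - (a + (b - a) * sin θ ^ 2)) =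
      ((b - a) * (sin θ * cos θ)) ^ 2 := by
  rw [mul_pow, mul_pow, cos_sq']
  ring

lemma sub_add_mul_sin_sq (a b c θ : ℝ) :
    c - (a + (b - a) * sin θ ^ 2) = (c - b) * sin θ ^ 2 + (c - a) * cos θ ^ 2 := by
  rw [cos_sq']
  ring

theorem integral_eq_integral_smul_add_mul_sin_sq (f : ℝ → E) (a b : ℝ) :
    ∫ x in a..b, f x =
      ∫ θ in (0 : ℝ)..(π / 2),
        (2 * ((b - a) * (sin θ * cos θ))) • f (a + (b - a) * sin θ ^ 2) := by
  have hcont : ContinuousOn (fun θ => a + (b - a) * sin θ ^ 2) (Set.uIcc 0 (π / 2)) := by fun_prop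
  have hpos : ∀ θ ∈ Set.Ioo (min 0 (π / 2)) (max 0 (π / 2)), 0 < sin θ * cos θ := by
    rw [min_eq_left pi_div_two_pos.le, max_eq_right pi_div_two_pos.le]
    exact fun θ => sin_mul_cos_pos_of_mem_Ioo
  have hderiv := fun θ (_ : θ ∈ Set.Ioo (min 0 (π / 2)) (max 0 (π / 2))) =>
    hasDerivAt_add_mul_sin_sq a (b - a) θ
  rcases le_total a b with hab | hba
  · simpa using (intervalIntegral.integral_deriv_smul_comp_of_deriv_nonneg (g := f) hcont hderiv
      fun θ hθ => mul_nonneg two_pos.le (mul_nonneg (sub_nonneg.2 hab) (hpos θ hθ).le)).symm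
  · simpa using (intervalIntegral.integral_deriv_smul_comp_of_deriv_nonpos (g := f) hcont hderiv
      fun θ hθ => mul_nonpos_of_nonneg_of_nonpos two_pos.le
        (mul_nonpos_of_nonpos_of_nonneg (sub_nonpos.2 hba) (hpos θ hθ).le)).symm

theorem integral_inv_sqrt_sub_mul_sub_smul (f : ℝ → E) {a b : ℝ} (hab : a < b) :
    ∫ x in a..b, (√((x - a) * (b - x)))⁻¹ • f x =
      (2 : ℝ) • ∫ θ in (0 : ℝ)..(π / 2), f (a + (b - a) * sin θ ^ 2) := by
  rw [integral_eq_integral_smul_add_mul_sin_sq, ← intervalIntegral.integral_smul]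
  refine intervalIntegral.integral_congr_Ioo_of_le pi_div_two_pos.le fun θ hθ => ?_
  have hpos : 0 < (b - a) * (sin θ * cos θ) :=
    mul_pos (sub_pos.2 hab) (sin_mul_cos_pos_of_mem_Ioo hθ)
  simp only [add_mul_sin_sq_sub_mul_sub, sqrt_sq hpos.le]
  rw [smul_smul, mul_inv_cancel_right₀ hpos.ne']

end SinSqSubstitution

/-- For reals `a < b < c`,
`∫_a^b dx/√((x-a)(b-x)(c-x)) = 2·∫_0^{π/2} dθ/√((c-b)sin²θ + (c-a)cos²θ)`. -/
theorem stmt_9 (a b c : ℝ) (hab : a < b) (hbc : b < c) :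
    ∫ x in a..b, 1 / Real.sqrt ((x - a) * (b - x) * (c - x)) =
      2 * ∫ θ in (0:ℝ)..(π / 2),
        1 / Real.sqrt ((c - b) * Real.sin θ ^ 2 + (c - a) * Real.cos θ ^ 2) := by
  have hfactor : ∀ x ∈ Set.Ioo a b, 1 / √((x - a) * (b - x) * (c - x)) =
      (√((x - a) * (b - x)))⁻¹ • (1 / √(c - x)) := fun x hx => by
    rw [sqrt_mul (mul_pos (sub_pos.2 hx.1) (sub_pos.2 hx.2)).le, one_div, one_div, mul_inv,
      smul_eq_mul]
  calc ∫ x in a..b, 1 / √((x - a) * (b - x) * (c - x))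
      = ∫ x in a..b, (√((x - a) * (b - x)))⁻¹ • (1 / √(c - x)) :=
        intervalIntegral.integral_congr_Ioo_of_le hab.le hfactor
    _ = 2 * ∫ θ in (0 : ℝ)..(π / 2), 1 / √(c - (a + (b - a) * sin θ ^ 2)) :=
        integral_inv_sqrt_sub_mul_sub_smul _ hab
    _ = 2 * ∫ θ in (0 : ℝ)..(π / 2), 1 / √((c - b) * sin θ ^ 2 + (c - a) * cos θ ^ 2) := by
        simp only [sub_add_mul_sin_sq]
end

section
/- Let 0 < r < s be real numbers. Then ∫_0^{π/2} dθ/√(r²·sin²θ + s²·cos²θ) = ∫_0^{π/2} dθ/√(r·s·sin²θ + ((r + s)/2)²·cos²θ); that is, I(r, s) = I(√(rs), (r + s)/2), where I(r, s) := ∫_0^{π/2} dθ/√(r²sin²θ + s²cos²θ). -/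
open Real

/-!
This is Landen's transformation. For `0 < r, s` let `ψ` be the argument of the point
`(s cos θ, r sin θ)` of the ellipse, and `φ = θ + ψ`. As `θ` runs over `[0, π/2]`, `φ` runs over
`[0, π]`, and with `D = r sin² θ + s cos² θ` and `Q = r² sin² θ + s² cos² θ` one finds
`dφ/dθ = (r + s) D / Q` and `r s sin² φ + ((r + s)/2)² cos² φ = ((r + s)/2 · D)² / Q`.
Hence `dφ / √(r s sin² φ + ((r + s)/2)² cos² φ) = 2 dθ / √Q`, and the factor `2` is absorbed by the
symmetry `φ ↦ π - φ`.
-/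

/-- The quadratic form `a x² + b y²` at the point `(x, y) = (sin θ, cos θ)` of the unit circle. -/
noncomputable def sinCosForm (a b θ : ℝ) : ℝ :=
  a * sin θ ^ 2 + b * cos θ ^ 2

/-- The complete elliptic integral `I(r, s)`, in the normalization suited to the
arithmetic-geometric mean. -/
noncomputable def agmIntegral (r s : ℝ) : ℝ :=
  ∫ θ in (0 : ℝ)..(π / 2), 1 / √(sinCosForm (r ^ 2) (s ^ 2) θ)

/-- The tangent of `ψ - θ`, where `ψ` is the argument of `(s cos θ, r sin θ)`. -/
noncomputable def landenSlope (r s θ : ℝ) : ℝ :=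
  (r - s) * (sin θ * cos θ) / sinCosForm r s θ

/-- Landen's angle `θ + ψ`, where `ψ` is the argument of `(s cos θ, r sin θ)`. Writing `ψ` as
`θ + arctan (tan (ψ - θ))` makes it smooth on the whole line when `0 < r, s`. -/
noncomputable def landenAngle (r s θ : ℝ) : ℝ :=
  2 * θ + arctan (landenSlope r s θ)

theorem cos_add_arctan (x w : ℝ) :
    cos (x + arctan w) = (cos x - w * sin x) / √(1 + w ^ 2) := by
  rw [cos_add, cos_arctan, sin_arctan]
  ring

theorem integral_eq_two_smul_integral_half_of_comp_sub_left {E : Type*} [NormedAddCommGroup E]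
    [NormedSpace ℝ E] {f : ℝ → E} {c : ℝ}
    (hf : IntervalIntegrable f MeasureTheory.volume 0 (c / 2))
    (hsymm : ∀ x, f (c - x) = f x) :
    ∫ x in (0 : ℝ)..c, f x = (2 : ℝ) • ∫ x in (0 : ℝ)..(c / 2), f x := by
  have upper_integrable : IntervalIntegrable f MeasureTheory.volume (c / 2) c := by
    simpa only [hsymm, sub_half, sub_zero] using (hf.comp_sub_left c).symm
  have upper_half : ∫ x in (c / 2)..c, f x = ∫ x in (0 : ℝ)..(c / 2), f x := by
    simpa only [hsymm, sub_half, sub_zero] using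
      (intervalIntegral.integral_comp_sub_left (a := 0) (b := c / 2) f c).symm
  rw [← intervalIntegral.integral_add_adjacent_intervals hf upper_integrable, upper_half, two_smul]

section SinCosForm

variable {a b : ℝ}

theorem sinCosForm_pos (ha : 0 < a) (hb : 0 < b) (θ : ℝ) : 0 < sinCosForm a b θ := by
  unfold sinCosForm
  rcases eq_or_ne (sin θ) 0 with hsin | hsin
  · have hcos : cos θ ^ 2 = 1 := by simp [cos_sq', hsin]
    simpa [hsin, hcos] using hb
  · positivity

theorem sinCosForm_pi_sub (a b θ : ℝ) : sinCosForm a b (π - θ) = sinCosForm a b θ := by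
  simp [sinCosForm]

theorem continuous_sinCosForm (a b : ℝ) : Continuous (sinCosForm a b) := by
  unfold sinCosForm
  fun_prop

theorem continuous_one_div_sqrt_sinCosForm (ha : 0 < a) (hb : 0 < b) :
    Continuous fun θ ↦ 1 / √(sinCosForm a b θ) :=
  continuous_const.div (continuous_sinCosForm a b).sqrt fun θ ↦
    (sqrt_pos.2 (sinCosForm_pos ha hb θ)).ne'

theorem hasDerivAt_sinCosForm (a b θ : ℝ) :
    HasDerivAt (sinCosForm a b) (2 * (a - b) * (sin θ * cos θ)) θ := by
  refine ((((hasDerivAt_sin θ).fun_pow 2).const_mul a).fun_add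
    (((hasDerivAt_cos θ).fun_pow 2).const_mul b)).congr_deriv ?_
  push_cast
  ring

theorem sinCosForm_sq_add_sq (r s θ : ℝ) :
    sinCosForm r s θ ^ 2 + ((r - s) * (sin θ * cos θ)) ^ 2 = sinCosForm (r ^ 2) (s ^ 2) θ := by
  unfold sinCosForm
  linear_combination (r ^ 2 * sin θ ^ 2 + s ^ 2 * cos θ ^ 2) * sin_sq_add_cos_sq θ

theorem sinCosForm_sq_add_mul (r s θ : ℝ) :
    sinCosForm (r ^ 2) (s ^ 2) θ + r * s = (r + s) * sinCosForm r s θ := by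
  unfold sinCosForm
  linear_combination -(r * s) * sin_sq_add_cos_sq θ

end SinCosForm

section Landen

variable {r s : ℝ}

theorem one_add_landenSlope_sq (hr : 0 < r) (hs : 0 < s) (θ : ℝ) :
    1 + landenSlope r s θ ^ 2 = sinCosForm (r ^ 2) (s ^ 2) θ / sinCosForm r s θ ^ 2 := by
  have hD := (sinCosForm_pos hr hs θ).ne'
  rw [← sinCosForm_sq_add_sq, landenSlope]
  field_simp

theorem hasDerivAt_landenSlope (hr : 0 < r) (hs : 0 < s) (θ : ℝ) :
    HasDerivAt (landenSlope r s)
      ((r - s) * (s * cos θ ^ 2 - r * sin θ ^ 2) / sinCosForm r s θ ^ 2) θ := by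
  refine ((((hasDerivAt_sin θ).fun_mul (hasDerivAt_cos θ)).const_mul (r - s)).fun_div
    (hasDerivAt_sinCosForm r s θ) (sinCosForm_pos hr hs θ).ne').congr_deriv ?_
  congr 1
  unfold sinCosForm
  linear_combination
    (r - s) * (s * cos θ ^ 2 - r * sin θ ^ 2) * sin_sq_add_cos_sq θ

theorem hasDerivAt_landenAngle (hr : 0 < r) (hs : 0 < s) (θ : ℝ) :
    HasDerivAt (landenAngle r s)
      ((r + s) * sinCosForm r s θ / sinCosForm (r ^ 2) (s ^ 2) θ) θ := by
  have hD := (sinCosForm_pos hr hs θ).ne'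
  have hQ := (sinCosForm_pos (pow_pos hr 2) (pow_pos hs 2) θ).ne'
  refine (((hasDerivAt_id' θ).const_mul 2).fun_add
    (hasDerivAt_landenSlope hr hs θ).arctan).congr_deriv ?_
  rw [one_add_landenSlope_sq hr hs, ← sinCosForm_sq_add_mul]
  field_simp
  unfold sinCosForm
  linear_combination r * s * sin_sq_add_cos_sq θ

theorem cos_landenAngle_sq (hr : 0 < r) (hs : 0 < s) (θ : ℝ) :
    cos (landenAngle r s θ) ^ 2 =
      (s * cos θ ^ 2 - r * sin θ ^ 2) ^ 2 / sinCosForm (r ^ 2) (s ^ 2) θ := by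
  have hD := (sinCosForm_pos hr hs θ).ne'
  have numerator : cos (2 * θ) - landenSlope r s θ * sin (2 * θ) =
      (s * cos θ ^ 2 - r * sin θ ^ 2) / sinCosForm r s θ := by
    rw [landenSlope, cos_two_mul', sin_two_mul]
    field_simp
    unfold sinCosForm
    linear_combination (s * cos θ ^ 2 - r * sin θ ^ 2) * sin_sq_add_cos_sq θ
  rw [landenAngle, cos_add_arctan, numerator, div_pow, sq_sqrt (by positivity),
    one_add_landenSlope_sq hr hs]
  field_simp

theorem sinCosForm_landenAngle (hr : 0 < r) (hs : 0 < s) (θ : ℝ) :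
    sinCosForm (r * s) (((r + s) / 2) ^ 2) (landenAngle r s θ) =
      ((r + s) / 2 * sinCosForm r s θ) ^ 2 / sinCosForm (r ^ 2) (s ^ 2) θ := by
  have hQ := (sinCosForm_pos (pow_pos hr 2) (pow_pos hs 2) θ).ne'
  rw [sinCosForm, sin_sq, cos_landenAngle_sq hr hs]
  field_simp
  unfold sinCosForm
  linear_combination
    -4 * r * s * (r ^ 2 * sin θ ^ 2 + s ^ 2 * cos θ ^ 2) * sin_sq_add_cos_sq θ

theorem landenAngle_zero (r s : ℝ) : landenAngle r s 0 = 0 := by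
  simp [landenAngle, landenSlope]

theorem landenAngle_pi_div_two (r s : ℝ) : landenAngle r s (π / 2) = π := by
  simp [landenAngle, landenSlope, mul_div_cancel₀]

theorem one_div_sqrt_sinCosForm_landenAngle_mul_deriv (hr : 0 < r) (hs : 0 < s) (θ : ℝ) :
    1 / √(sinCosForm (r * s) (((r + s) / 2) ^ 2) (landenAngle r s θ)) *
        ((r + s) * sinCosForm r s θ / sinCosForm (r ^ 2) (s ^ 2) θ) =
      2 * (1 / √(sinCosForm (r ^ 2) (s ^ 2) θ)) := by
  have hD := sinCosForm_pos hr hs θ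
  have hQ := sinCosForm_pos (pow_pos hr 2) (pow_pos hs 2) θ
  rw [sinCosForm_landenAngle hr hs, sqrt_div (by positivity), sqrt_sq (by positivity)]
  nth_rw 2 [← sq_sqrt hQ.le]
  field_simp

theorem integral_zero_pi_one_div_sqrt_sinCosForm (hr : 0 < r) (hs : 0 < s) :
    ∫ φ in (0 : ℝ)..π, 1 / √(sinCosForm (r * s) (((r + s) / 2) ^ 2) φ) =
      2 * agmIntegral r s := by
  have continuous_deriv : Continuous fun θ ↦
      (r + s) * sinCosForm r s θ / sinCosForm (r ^ 2) (s ^ 2) θ :=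
    ((continuous_sinCosForm r s).const_mul (r + s)).div (continuous_sinCosForm _ _)
      fun θ ↦ (sinCosForm_pos (pow_pos hr 2) (pow_pos hs 2) θ).ne'
  have substitution := intervalIntegral.integral_comp_mul_deriv (a := 0) (b := π / 2)
    (fun θ _ ↦ hasDerivAt_landenAngle hr hs θ) continuous_deriv.continuousOn
    (continuous_one_div_sqrt_sinCosForm (mul_pos hr hs) (by positivity : 0 < ((r + s) / 2) ^ 2))
  simp only [Function.comp_apply, one_div_sqrt_sinCosForm_landenAngle_mul_deriv hr hs,
    landenAngle_zero, landenAngle_pi_div_two] at substitution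
  rw [← substitution, intervalIntegral.integral_const_mul, agmIntegral]

theorem stmt_10_general (hr : 0 < r) (hs : 0 < s) :
    agmIntegral r s = agmIntegral √(r * s) ((r + s) / 2) := by
  have integrand_continuous := continuous_one_div_sqrt_sinCosForm (mul_pos hr hs)
    (by positivity : 0 < ((r + s) / 2) ^ 2)
  have fold_half := integral_eq_two_smul_integral_half_of_comp_sub_left
    (integrand_continuous.intervalIntegrable 0 (π / 2)) fun θ ↦ by rw [sinCosForm_pi_sub]
  rw [integral_zero_pi_one_div_sqrt_sinCosForm hr hs, smul_eq_mul] at fold_half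
  rw [agmIntegral.eq_def √(r * s), sq_sqrt (mul_pos hr hs).le]
  exact mul_left_cancel₀ two_ne_zero fold_half

end Landen

/-- The AGM invariance of the elliptic integral: for `0 < r < s`,
`I(r, s) = I(√(rs), (r + s)/2)`, where
`I(r, s) = ∫_0^{π/2} dθ/√(r²sin²θ + s²cos²θ)`. -/
theorem stmt_10 (r s : ℝ) (hr : 0 < r) (hrs : r < s) :
    (∫ θ in (0:ℝ)..(π / 2),
        1 / Real.sqrt (r ^ 2 * Real.sin θ ^ 2 + s ^ 2 * Real.cos θ ^ 2)) =
      ∫ θ in (0:ℝ)..(π / 2),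
        1 / Real.sqrt (r * s * Real.sin θ ^ 2 + ((r + s) / 2) ^ 2 * Real.cos θ ^ 2) := by
  have hs : 0 < s := hr.trans hrs
  simpa only [agmIntegral, sinCosForm, sq_sqrt (mul_pos hr hs).le] using stmt_10_general hr hs
end

section
/- Let t ≥ 1 be an integer with t ≠ 2 such that t² + 4 is squarefree. Then the only pair of positive integers (x, y) satisfying y² = (t² + 4)·x⁴ - 4 is (x, y) = (1, t); that is, {(x, y) ∈ ℤ² : x ≥ 1, y ≥ 1, y² = (t² + 4)x⁴ - 4} = {(1, t)}. -/
/-!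
Let `ω = (t + √(t² + 4)) / 2`, so that `ω² = 1 + tω` and `ω` has norm `-1`. A positive solution
`(x, y)` gives the element `a + x²ω` of `ℤ[ω]` of norm `-1`, where `y = tx² + 2a`; descent by `ω⁻¹`
shows that it is a power `ωⁿ`, with `n` odd because of the sign of the norm. Hence `n = 4m ± 1`.

Squarefreeness of `t² + 4` forces `t` to be odd. If `m ≠ 0`, write `4m = 2ᵏ⁺²j` with `j` odd and
let `V` be the trace of `z = ω^(2ᵏ⁺¹)`. As `z` has norm `1`, `V` divides `z² + 1`, hence also
`ω^(4m) + 1`, so `ωⁿ ≡ -ω^(±1)` modulo `V`. Comparing the coefficients of `ω` gives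
`x² ≡ -1 (mod V)`, which is impossible because `V ≡ 3 (mod 4)` for odd `t`.
-/

open scoped QuadraticAlgebra

section QuadraticAlgebra

variable {R : Type*} [CommRing R] {a b : R}

theorem trace_sq (z : QuadraticAlgebra R a b) : (z ^ 2).trace = z.trace ^ 2 - 2 * z.norm := by
  simp only [QuadraticAlgebra.trace_def, QuadraticAlgebra.norm_def, sq, QuadraticAlgebra.re_mul,
    QuadraticAlgebra.im_mul]
  ring

theorem algebraMap_trace_dvd_sq_add_one {z : QuadraticAlgebra R a b} (hz : z.norm = 1) :
    algebraMap R (QuadraticAlgebra R a b) z.trace ∣ z ^ 2 + 1 := by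
  refine ⟨z, ?_⟩
  rw [z.sq_eq_trace_smul_sub_norm, hz, map_one, sub_add_cancel, Algebra.smul_def]

theorem norm_omega : (ω : QuadraticAlgebra R a b).norm = -a := by
  simp [QuadraticAlgebra.norm_def]

theorem norm_omega_pow (n : ℕ) : ((ω : QuadraticAlgebra R a b) ^ n).norm = (-a) ^ n := by
  rw [map_pow, norm_omega]

theorem omega_mul_omega_sub_algebraMap :
    (ω : QuadraticAlgebra R a b) * (ω - algebraMap R _ b) = algebraMap R _ a := by
  rw [mul_sub, QuadraticAlgebra.omega_mul_omega_eq_algebraMap]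
  ring

end QuadraticAlgebra

theorem not_dvd_sq_add_one_of_emod_four_eq_three {v : ℤ} (hv : 0 ≤ v) (hv4 : v % 4 = 3) (x : ℤ) :
    ¬ v ∣ x ^ 2 + 1 := by
  lift v to ℕ using hv
  intro hdvd
  have hv4' : v % 4 = 3 := by exact_mod_cast hv4
  have hjacobi : jacobiSym (-1) v = -1 := by
    rw [jacobiSym.at_neg_one (Nat.odd_iff.mpr (Nat.odd_of_mod_four_eq_three hv4')),
      ZMod.χ₄_nat_three_mod_four hv4']
  have hzero : ((x ^ 2 + 1 : ℤ) : ZMod v) = 0 := (ZMod.intCast_zmod_eq_zero_iff_dvd _ v).mpr hdvd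
  refine ZMod.nonsquare_of_jacobiSym_eq_neg_one hjacobi ⟨x, ?_⟩
  push_cast at hzero ⊢
  linear_combination -hzero

section Powers

variable {t : ℤ}

theorem trace_omega_pow_two_pow_pos_and_emod_four (ht : Odd t) (k : ℕ) :
    0 < ((ω : QuadraticAlgebra ℤ 1 t) ^ 2 ^ (k + 1)).trace ∧
      ((ω : QuadraticAlgebra ℤ 1 t) ^ 2 ^ (k + 1)).trace % 4 = 3 := by
  induction k with
  | zero =>
    obtain ⟨s, rfl⟩ := ht
    have htrace : ((ω : QuadraticAlgebra ℤ 1 (2 * s + 1)) ^ 2 ^ (0 + 1)).trace =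
        4 * (s ^ 2 + s) + 3 := by
      rw [zero_add, pow_one, trace_sq, norm_omega, QuadraticAlgebra.trace_omega]
      ring
    exact htrace ▸ ⟨by nlinarith, by lia⟩
  | succ k ih =>
    set V := ((ω : QuadraticAlgebra ℤ 1 t) ^ 2 ^ (k + 1)).trace
    have htrace : ((ω : QuadraticAlgebra ℤ 1 t) ^ 2 ^ (k + 1 + 1)).trace = V ^ 2 - 2 := by
      rw [pow_succ 2 (k + 1), pow_mul, trace_sq, norm_omega_pow,
        (even_two.pow_of_ne_zero k.succ_ne_zero).neg_one_pow, mul_one]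
    obtain ⟨q, hq⟩ : ∃ q, V = 4 * q + 3 := ⟨V / 4, by lia⟩
    have hq0 : 0 ≤ q := by lia
    have hV : V ^ 2 - 2 = 4 * (4 * q ^ 2 + 6 * q + 1) + 3 := by
      rw [hq]
      ring
    exact (htrace.trans hV) ▸ ⟨by positivity, by lia⟩

theorem exists_algebraMap_dvd_omega_pow_add_one (ht : Odd t) {m : ℕ} (hm : m ≠ 0) :
    ∃ v : ℤ, 0 ≤ v ∧ v % 4 = 3 ∧
      algebraMap ℤ (QuadraticAlgebra ℤ 1 t) v ∣ ω ^ (4 * m) + 1 := by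
  obtain ⟨k, j, hj, rfl⟩ := Nat.exists_eq_two_pow_mul_odd hm
  obtain ⟨hpos, hmod⟩ := trace_omega_pow_two_pow_pos_and_emod_four ht k
  refine ⟨_, hpos.le, hmod, ?_⟩
  set z : QuadraticAlgebra ℤ 1 t := ω ^ 2 ^ (k + 1)
  have hz : z.norm = 1 := by
    rw [norm_omega_pow, (even_two.pow_of_ne_zero k.succ_ne_zero).neg_one_pow]
  have hpow : ω ^ (4 * (2 ^ k * j)) = (z ^ 2) ^ j := by
    rw [← pow_mul, ← pow_mul]
    ring_nf
  calc algebraMap ℤ _ z.trace ∣ z ^ 2 + 1 := algebraMap_trace_dvd_sq_add_one hz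
    _ ∣ (z ^ 2) ^ j + 1 := by simpa using hj.add_dvd_pow_add_pow (z ^ 2) 1
    _ = ω ^ (4 * (2 ^ k * j)) + 1 := by rw [hpow]

theorem not_isSquare_im_omega_pow_mul (ht : Odd t) {m : ℕ} (hm : m ≠ 0)
    {u : QuadraticAlgebra ℤ 1 t} (hu : u.im = 1) : ¬ IsSquare (ω ^ (4 * m) * u).im := by
  rintro ⟨x, hx⟩
  obtain ⟨v, hv0, hv4, hdvd⟩ := exists_algebraMap_dvd_omega_pow_add_one ht hm
  have him : ((ω ^ (4 * m) + 1) * u).im = x ^ 2 + 1 := by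
    rw [add_mul, one_mul, QuadraticAlgebra.im_add, hx, hu, sq]
  exact not_dvd_sq_add_one_of_emod_four_eq_three hv0 hv4 x <|
    him ▸ (QuadraticAlgebra.algebraMap_dvd_iff.mp (hdvd.mul_right u)).2

theorem eq_one_of_isSquare_im_omega_pow (ht : Odd t) {n : ℕ} (hn : Odd n)
    (hsq : IsSquare ((ω : QuadraticAlgebra ℤ 1 t) ^ n).im) : n = 1 := by
  rcases Nat.odd_mod_four_iff.mp (Nat.odd_iff.mp hn) with hn1 | hn3
  · obtain ⟨m, rfl⟩ : ∃ m, n = 4 * m + 1 := ⟨n / 4, by lia⟩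
    by_contra hne
    rw [pow_succ] at hsq
    exact not_isSquare_im_omega_pow_mul ht (by lia) QuadraticAlgebra.omega_im hsq
  · obtain ⟨m, hm⟩ : ∃ m, n + 1 = 4 * m := ⟨(n + 1) / 4, by lia⟩
    have hpow : (ω : QuadraticAlgebra ℤ 1 t) ^ n = ω ^ (4 * m) * (ω - algebraMap ℤ _ t) := by
      rw [← hm, pow_succ, mul_assoc, omega_mul_omega_sub_algebraMap, map_one, mul_one]
    rw [hpow] at hsq
    exact absurd hsq (not_isSquare_im_omega_pow_mul ht (by lia) (by simp))

end Powers

section Descent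

variable {t : ℤ}

theorem mul_re_le_im_of_isUnit {z : QuadraticAlgebra ℤ 1 t} (hz : IsUnit z) (hre : 0 < z.re)
    (him : 0 < z.im) : t * z.re ≤ z.im := by
  by_contra! hlt
  have hnorm : z.norm = z.re ^ 2 + z.im * (t * z.re - z.im) := by
    rw [QuadraticAlgebra.norm_def]
    ring
  have hnorm_ge : 2 ≤ z.norm := by nlinarith
  rcases Int.isUnit_iff.mp (QuadraticAlgebra.isUnit_iff_norm_isUnit.mp hz) with h | h <;> lia

theorem exists_omega_pow_eq_of_isUnit (ht : 0 < t) (z : QuadraticAlgebra ℤ 1 t) (hz : IsUnit z)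
    (hre : 0 ≤ z.re) (him : 0 ≤ z.im) : ∃ n : ℕ, ω ^ n = z := by
  have hnorm := Int.isUnit_iff.mp (QuadraticAlgebra.isUnit_iff_norm_isUnit.mp hz)
  rw [QuadraticAlgebra.norm_def] at hnorm
  rcases him.eq_or_lt with him0 | him_pos
  · have hre1 : z.re = 1 := by
      rw [← him0] at hnorm
      rcases hnorm with h | h <;> nlinarith
    exact ⟨0, by ext <;> simp [hre1, ← him0]⟩
  rcases hre.eq_or_lt with hre0 | hre_pos
  · have him1 : z.im = 1 := by
      rw [← hre0] at hnorm
      rcases hnorm with h | h <;> nlinarith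
    exact ⟨1, by ext <;> simp [him1, ← hre0]⟩
  let w : QuadraticAlgebra ℤ 1 t := ⟨z.im - t * z.re, z.re⟩
  have hw : ω * w = z := by ext <;> simp [w]
  have hw_re : 0 ≤ w.re := sub_nonneg.mpr (mul_re_le_im_of_isUnit hz hre_pos him_pos)
  obtain ⟨n, hn⟩ := exists_omega_pow_eq_of_isUnit ht w (isUnit_of_mul_isUnit_right (hw ▸ hz))
    hw_re hre
  exact ⟨n + 1, by rw [pow_succ', hn, hw]⟩
termination_by (z.re + z.im).toNat
decreasing_by
  have hle : z.re ≤ t * z.re := le_mul_of_one_le_left hre ht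
  lia

end Descent

theorem exists_eq_mul_add_two_mul_and_norm_eq {t b y : ℤ} (h : y ^ 2 = (t ^ 2 + 4) * b ^ 2 - 4) :
    ∃ a : ℤ, y = t * b + 2 * a ∧ (⟨a, b⟩ : QuadraticAlgebra ℤ 1 t).norm = -1 := by
  have heven : Even (y - t * b) := by
    have hsq : Even (y ^ 2 - (t * b) ^ 2) := ⟨2 * (b ^ 2 - 1), by linear_combination h⟩
    simpa [parity_simps] using hsq
  obtain ⟨a, ha⟩ := heven.two_dvd
  obtain rfl : y = t * b + 2 * a := by linear_combination ha
  refine ⟨a, rfl, ?_⟩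
  rw [QuadraticAlgebra.norm_def]
  linarith

theorem exists_omega_pow_eq_of_sq_eq {t b y : ℤ} (ht : 0 < t) (hb : 0 < b) (hy : 0 ≤ y)
    (h : y ^ 2 = (t ^ 2 + 4) * b ^ 2 - 4) :
    ∃ (a : ℤ) (n : ℕ), y = t * b + 2 * a ∧ Odd n ∧ (ω : QuadraticAlgebra ℤ 1 t) ^ n = ⟨a, b⟩ := by
  obtain ⟨a, rfl, hnorm⟩ := exists_eq_mul_add_two_mul_and_norm_eq h
  have hle : t * b ≤ t * b + 2 * a := le_of_sq_le_sq (by nlinarith) hy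
  obtain ⟨n, hn⟩ := exists_omega_pow_eq_of_isUnit ht ⟨a, b⟩
    (QuadraticAlgebra.isUnit_iff_norm_isUnit.mpr (by simp [hnorm])) (by lia) hb.le
  rw [← hn, norm_omega_pow] at hnorm
  exact ⟨a, n, rfl, neg_one_pow_eq_neg_one_iff_odd (by decide) |>.mp hnorm, hn⟩

theorem stmt_12_general (t : ℤ) (ht : 1 ≤ t) (hodd : Odd t) :
    {p : ℤ × ℤ | 1 ≤ p.1 ∧ 1 ≤ p.2 ∧ p.2 ^ 2 = (t ^ 2 + 4) * p.1 ^ 4 - 4} = {(1, t)} := by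
  ext ⟨x, y⟩
  simp only [Set.mem_ofPred_eq, Set.mem_singleton_iff, Prod.mk.injEq]
  constructor
  · rintro ⟨hx, hy, h⟩
    obtain ⟨a, n, hya, hn, hpow⟩ := exists_omega_pow_eq_of_sq_eq (t := t) (b := x ^ 2)
      (y := y) (by lia) (by positivity) (by lia) (by rw [h]; ring)
    obtain rfl : n = 1 := eq_one_of_isSquare_im_omega_pow hodd hn (hpow ▸ ⟨x, sq x⟩)
    obtain ⟨ha, hx2⟩ : 0 = a ∧ 1 = x ^ 2 := by simpa [QuadraticAlgebra.ext_iff] using hpow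
    obtain rfl : x = 1 := by nlinarith
    exact ⟨rfl, by rw [hya, ← ha]; ring⟩
  · rintro ⟨rfl, rfl⟩
    exact ⟨le_rfl, ht, by ring⟩

theorem odd_of_squarefree_sq_add_four {t : ℤ} (ht : Squarefree (t ^ 2 + 4)) : Odd t := by
  by_contra heven
  obtain ⟨k, rfl⟩ := (Int.not_odd_iff_even.mp heven).two_dvd
  have hunit : IsUnit (2 : ℤ) := ht 2 ⟨k ^ 2 + 1, by ring⟩
  exact absurd hunit (by decide)

/-- For an integer `t ≥ 1`, `t ≠ 2`, with `t² + 4` squarefree, the only pair of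
positive integers `(x, y)` with `y² = (t² + 4)x⁴ - 4` is `(1, t)`. -/
theorem stmt_12 (t : ℤ) (ht1 : 1 ≤ t) (ht2 : t ≠ 2) (hsf : Squarefree (t ^ 2 + 4)) :
    {p : ℤ × ℤ | 1 ≤ p.1 ∧ 1 ≤ p.2 ∧ p.2 ^ 2 = (t ^ 2 + 4) * p.1 ^ 4 - 4} =
      {(1, t)} :=
  stmt_12_general t ht1 (odd_of_squarefree_sq_add_four hsf)
end
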